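/- Let c > 0 be arbitrary. There exist constants C, A < ∞, depending only on d and c, with the following property: if ε > 0 and E, E* ⊆ ℝ^d are Lebesgue measurable sets of positive finite measure satisfying ⟨T₀(χ_{E*}), χ_E⟩ ≥ ε Λ₀(|E|, |E*|), and moreover |E| ≥ c |E*|^d and |E*| ≥ c |E|^d, then there exists a ball ℬ = ℬ(z̄, e, r, r*) such that the associated pair (B, B*) = (π(ℬ), π*(ℬ)) satisfies ⟨T₀(χ_{E* ∩ B*}), χ_{E ∩ B}⟩ ≥ C^{−1} ε^A ⟨T₀(χ_{E*}), χ_E⟩, with |B| ≤ C|E| and |B*| ≤ C|E*|. -/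

import Mathlib

open MeasureTheory ENNReal
open scoped RealInnerProductSpace

noncomputable section

/-- `ℝ^{d-1}` -/
abbrev Vec (n : ℕ) : Type := EuclideanSpace ℝ (Fin n)

/-- `ℝ^d = ℝ^{d-1} × ℝ`, a point `x = (x', x_d)` -/
abbrev Pt (n : ℕ) : Type := Vec n × ℝ

/-- The Radon-like transform `Tf(x) = ∫_{ℝ^{d-1}} f(x' - t, x_d - |t|²) dt`. -/
def radonT (n : ℕ) (f : Pt n → ℝ≥0∞) (x : Pt n) : ℝ≥0∞ :=
  ∫⁻ t : Vec n, f (x.1 - t, x.2 - ‖t‖ ^ 2)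

/-- The incidence functional `𝒯(E, E*) = ∫_E T(χ_{E*})`. -/
def incT (n : ℕ) (E Estar : Set (Pt n)) : ℝ≥0∞ :=
  ∫⁻ x in E, radonT n (Estar.indicator 1) x

/-- Admissibility of the parameters of a ball `ℬ(z̄, e, r, r*)`:
the center `z̄ = (x̄, x̄*)` lies on the incidence manifold `ℐ`, `ρ > 0`,
`e` is an orthonormal basis of `ℝ^{d-1}`, and `r_j r*_j = ρ > 0` for all `j`. -/
def IsBallParams (n : ℕ) (zb : Pt n × Pt n) (e : Fin n → Vec n)
    (r rs : Fin n → ℝ) (ρ : ℝ) : Prop :=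
  zb.2.2 = zb.1.2 - ‖zb.2.1 - zb.1.1‖ ^ 2 ∧ 0 < ρ ∧ Orthonormal ℝ e ∧
    (∀ j, 0 < r j) ∧ (∀ j, 0 < rs j) ∧ (∀ j, r j * rs j = ρ)

/-- The ball `ℬ(z̄, e, r, r*)`, a subset of the incidence manifold
`ℐ = {(x,y) : y_d = x_d - |y' - x'|²} ⊆ ℝ^d × ℝ^d`. -/
def ballI (n : ℕ) (zb : Pt n × Pt n) (e : Fin n → Vec n)
    (r rs : Fin n → ℝ) (ρ : ℝ) : Set (Pt n × Pt n) :=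
  fun z => z.2.2 = z.1.2 - ‖z.2.1 - z.1.1‖ ^ 2 ∧
    (∀ j, |⟪z.1.1 - zb.1.1, e j⟫| < r j) ∧
    |z.1.2 - zb.2.2 - ‖z.1.1 - zb.2.1‖ ^ 2| < ρ ∧
    (∀ j, |⟪z.2.1 - zb.2.1, e j⟫| < rs j) ∧
    |z.2.2 - zb.1.2 + ‖z.2.1 - zb.1.1‖ ^ 2| < ρ

/-- The localized Radon-like transform
`T₀f(x) = ∫_{|t| ≤ 1} f(x' - t, x_d - |t|²) dt`. -/
def radonT0 (n : ℕ) (f : Pt n → ℝ≥0∞) (x : Pt n) : ℝ≥0∞ :=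
  ∫⁻ t in Metric.closedBall (0 : Vec n) 1, f (x.1 - t, x.2 - ‖t‖ ^ 2)

/-- The localized incidence functional `⟨T₀(χ_{E*}), χ_E⟩`. -/
def incT0 (n : ℕ) (E Estar : Set (Pt n)) : ℝ≥0∞ :=
  ∫⁻ x in E, radonT0 n (Estar.indicator 1) x

/-- `Λ₀(t, t*) = sup {⟨T₀(χ_{E*}), χ_E⟩ : |E| = t, |E*| = t*}`. -/
def Lam0 (n : ℕ) (t ts : ℝ≥0∞) : ℝ≥0∞ :=
  ⨆ (E : Set (Pt n)) (Es : Set (Pt n)) (_ : MeasurableSet E) (_ : MeasurableSet Es)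
    (_ : volume E = t) (_ : volume Es = ts), incT0 n E Es

/-- slab lemma in coordinates -/
theorem slab_pi {n : ℕ} (s : Fin n → ℝ) (a : Fin n → ℝ) (j : Fin n) (b : ℝ) (S : Set ℝ) :
    ENNReal.ofReal |a j| * volume {y : Fin n → ℝ | (∀ i, |y i| ≤ s i) ∧ b + ∑ i, a i * y i ∈ S}
      ≤ (∏ i ∈ Finset.univ.erase j, ENNReal.ofReal (2 * s i)) * volume S := by
  set A := {y : Fin n → ℝ | (∀ i, |y i| ≤ s i) ∧ b + ∑ i, a i * y i ∈ S}
  set M : Matrix (Fin n) (Fin n) ℝ := Matrix.updateRow 1 j a with hM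
  have hdet : LinearMap.det (Matrix.toLin' M) = a j := by
    rw [LinearMap.det_toLin', ← Matrix.det_transpose, hM, ← Matrix.updateCol_transpose,
      Matrix.transpose_one, ← Matrix.cramer_apply, Matrix.cramer_one]
    rfl
  have himg : (Matrix.toLin' M) '' A ⊆
      Set.pi Set.univ (fun i => if i = j then (fun t => b + t) ⁻¹' S else Set.Icc (-(s i)) (s i)) := by
    rintro _ ⟨y, ⟨hy1, hy2⟩, rfl⟩ i _
    by_cases hij : i = j
    · subst hij
      simpa [hM, Matrix.toLin'_apply, Matrix.mulVec, dotProduct] using hy2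
    · simp only [hij, if_false]
      have : Matrix.toLin' M y i = y i := by
        simp [hM, Matrix.toLin'_apply, Matrix.mulVec, Matrix.updateRow_ne hij, Matrix.one_apply, dotProduct]
      rw [this]
      exact abs_le.mp (hy1 i)
  calc ENNReal.ofReal |a j| * volume A = volume ((Matrix.toLin' M) '' A) := by
        rw [Measure.addHaar_image_linearMap, hdet]
    _ ≤ _ := measure_mono himg
    _ = _ := by
      rw [volume_pi_pi, ← Finset.mul_prod_erase _ _ (Finset.mem_univ j)]
      simp only [if_true, measure_preimage_add]
      rw [mul_comm]
      congr 1
      refine Finset.prod_congr rfl fun i hi => ?_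
      simp only [Finset.ne_of_mem_erase hi, if_false, Real.volume_Icc]
      congr 1; ring

/-- coordinates of a vector with respect to an orthonormal basis -/
def coordE {n : ℕ} (e : OrthonormalBasis (Fin n) ℝ (Vec n)) (y0 : Vec n) (y : Vec n) : Fin n → ℝ :=
  fun i => ⟪y - y0, e i⟫

theorem coordE_mp {n : ℕ} (e : OrthonormalBasis (Fin n) ℝ (Vec n)) (y0 : Vec n) :
    MeasurePreserving (coordE e y0) volume volume := by
  have h1 := measurePreserving_sub_right (volume : Measure (Vec n)) y0
  have h2 := e.measurePreserving_repr
  have h3 := PiLp.volume_preserving_ofLp (Fin n)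
  have := (h3.comp h2).comp h1
  have heq : coordE e y0 = (WithLp.ofLp ∘ ⇑e.repr) ∘ fun x => x - y0 := by
    funext y i
    simp [coordE, OrthonormalBasis.repr_apply_apply, real_inner_comm, inner_sub_left]
  rw [heq]; exact this

theorem slab_vec {n : ℕ} (e : OrthonormalBasis (Fin n) ℝ (Vec n)) (y0 : Vec n)
    (s : Fin n → ℝ) (a : Vec n) (j : Fin n) (b : ℝ) (S : Set ℝ) (hS : MeasurableSet S) :
    ENNReal.ofReal |⟪a, e j⟫| *
      volume {y : Vec n | (∀ i, |⟪y - y0, e i⟫| ≤ s i) ∧ b + ⟪a, y - y0⟫ ∈ S}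
      ≤ (∏ i ∈ Finset.univ.erase j, ENNReal.ofReal (2 * s i)) * volume S := by
  have h := slab_pi s (fun i => ⟪a, e i⟫) j b S
  rw [← (coordE_mp e y0).measure_preimage] at h
  · convert h using 4 with y
    ext y
    simp only [coordE, Set.mem_ofPred_eq, Set.mem_preimage]
    have : ⟪a, y - y0⟫ = ∑ i, ⟪a, e i⟫ * ⟪y - y0, e i⟫ := by
      rw [← e.sum_inner_mul_inner]
      refine Finset.sum_congr rfl fun i _ => by rw [real_inner_comm (e i) (y - y0)]
    rw [this]
  · apply MeasurableSet.nullMeasurableSet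
    have h1 : MeasurableSet (⋂ i, {y : Fin n → ℝ | |y i| ≤ s i}) :=
      MeasurableSet.iInter fun i => measurableSet_le (by fun_prop) (by fun_prop)
    have h2 : MeasurableSet ((fun y : Fin n → ℝ => b + ∑ i, ⟪a, e i⟫ * y i) ⁻¹' S) :=
      hS.preimage (by fun_prop)
    have h3 : {y : Fin n → ℝ | (∀ (i : Fin n), |y i| ≤ s i) ∧ b + ∑ i, ⟪a, e i⟫ * y i ∈ S} =
        (⋂ i, {y | |y i| ≤ s i}) ∩ (fun y => b + ∑ i, ⟪a, e i⟫ * y i) ⁻¹' S := by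
      ext y; simp
    rw [h3]
    exact h1.inter h2

theorem box_vec {n : ℕ} (e : OrthonormalBasis (Fin n) ℝ (Vec n)) (y0 : Vec n)
    (s : Fin n → ℝ) :
    volume {y : Vec n | ∀ i, |⟪y - y0, e i⟫| ≤ s i} = ∏ i, ENNReal.ofReal (2 * s i) := by
  have h : volume (Set.pi Set.univ (fun i => Set.Icc (-(s i)) (s i))) = ∏ i, ENNReal.ofReal (2 * s i) := by
    rw [volume_pi_pi]
    refine Finset.prod_congr rfl fun i hi => ?_
    rw [Real.volume_Icc]; congr 1; ring
  rw [← h, ← (coordE_mp e y0).measure_preimage]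
  · congr 1
    ext y
    simp only [coordE, abs_le, Set.mem_pi, Set.mem_ofPred_eq, Set.mem_preimage, Set.mem_univ, true_implies, Set.mem_Icc]
  · exact (MeasurableSet.univ_pi fun i => measurableSet_Icc).nullMeasurableSet

theorem median_lemma {α : Type*} [MeasurableSpace α] (μ : Measure α) (F : Set α)
    (hF : MeasurableSet F) (h0 : μ F ≠ 0) (h1 : μ F ≠ ⊤) (N : α → ℝ) (hN : Measurable N)
    (hz : μ (F ∩ {y | N y ≤ 0}) = 0) :
    ∃ r : ℝ, 0 < r ∧ μ F ≤ 2 * μ (F ∩ {y | N y ≤ r}) ∧ μ F ≤ 2 * μ (F ∩ {y | r / 2 < N y}) := by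
  have hmeas : ∀ r : ℝ, MeasurableSet (F ∩ {y | N y ≤ r}) := fun r =>
    hF.inter (measurableSet_le hN measurable_const)
  have hhalf : μ F / 2 < μ F := ENNReal.half_lt_self h0 h1
  -- some large r
  have hA : ∃ r : ℝ, 0 < r ∧ μ F / 2 < μ (F ∩ {y | N y ≤ r}) := by
    have hmono : Monotone (fun k : ℕ => F ∩ {y | N y ≤ (k : ℝ) + 1}) := by
      intro a b hab y hy
      refine ⟨hy.1, ?_⟩
      have h2 : N y ≤ (a : ℝ) + 1 := hy.2
      have : (a : ℝ) ≤ b := by exact_mod_cast hab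
      show N y ≤ (b : ℝ) + 1
      linarith
    have hU : (⋃ k : ℕ, F ∩ {y | N y ≤ (k : ℝ) + 1}) = F := by
      ext y
      simp only [Set.mem_iUnion, Set.mem_inter_iff, Set.mem_ofPred_eq]
      constructor
      · rintro ⟨k, h, _⟩; exact h
      · intro h
        obtain ⟨k, hk⟩ := exists_nat_ge (N y)
        exact ⟨k, h, by linarith⟩
    have ht := tendsto_measure_iUnion_atTop (μ := μ) hmono
    rw [hU] at ht
    obtain ⟨k, hk⟩ := (ht.eventually (lt_mem_nhds hhalf)).exists
    exact ⟨k + 1, by positivity, hk⟩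
  by_contra hcon
  push Not at hcon
  obtain ⟨r0, hr0, hr1⟩ := hA
  have hstep : ∀ r : ℝ, 0 < r → μ F / 2 ≤ μ (F ∩ {y | N y ≤ r}) →
      μ F / 2 ≤ μ (F ∩ {y | N y ≤ r / 2}) := by
    intro r hr h
    have h2 := hcon r hr (by
      calc μ F = 2 * (μ F / 2) := by rw [ENNReal.mul_div_cancel (by simp) (by simp)]
        _ ≤ _ := by gcongr)
    by_contra h3
    push Not at h3
    have hsplit : μ F = μ (F ∩ {y | N y ≤ r / 2}) + μ (F ∩ {y | r / 2 < N y}) := by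
      rw [← measure_inter_add_sdiff F (measurableSet_le hN measurable_const : MeasurableSet {y | N y ≤ r / 2})]
      congr 2
      ext y; simp
    have h4 : μ (F ∩ {y | r / 2 < N y}) < μ F / 2 := by
      rw [ENNReal.lt_div_iff_mul_lt (by simp) (by simp)]
      rwa [mul_comm]
    have := ENNReal.add_lt_add h3 h4
    rw [← hsplit, ENNReal.add_halves] at this
    exact lt_irrefl _ this
  have hall : ∀ k : ℕ, μ F / 2 ≤ μ (F ∩ {y | N y ≤ r0 / 2 ^ k}) := by
    intro k
    induction k with
    | zero => simpa using hr1.le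
    | succ k ih =>
      have := hstep _ (by positivity) ih
      rwa [div_div, ← pow_succ] at this
  have hanti : Antitone (fun k : ℕ => F ∩ {y | N y ≤ r0 / 2 ^ k}) := by
    intro a b hab y hy
    refine ⟨hy.1, le_trans (show N y ≤ r0 / 2 ^ b from hy.2) ?_⟩
    apply div_le_div_of_nonneg_left hr0.le (by positivity)
    exact pow_le_pow_right₀ (by norm_num) hab
  have ht := tendsto_measure_iInter_atTop (μ := μ) (fun k => (hmeas (r0 / 2 ^ k)).nullMeasurableSet)
    hanti ⟨0, ne_top_of_le_ne_top h1 (measure_mono Set.inter_subset_left)⟩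
  have hle := ge_of_tendsto' ht hall
  have hI : (⋂ k : ℕ, F ∩ {y | N y ≤ r0 / 2 ^ k}) ⊆ F ∩ {y | N y ≤ 0} := by
    intro y hy
    simp only [Set.mem_iInter, Set.mem_inter_iff, Set.mem_ofPred_eq] at hy
    refine ⟨(hy 0).1, ?_⟩
    have hl : Filter.Tendsto (fun k : ℕ => r0 / 2 ^ k) Filter.atTop (nhds 0) := by
      have := (tendsto_pow_atTop_nhds_zero_of_lt_one (r := (1/2 : ℝ)) (by norm_num) (by norm_num)).const_mul r0
      simpa [div_eq_mul_inv] using this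
    exact ge_of_tendsto' hl fun k => (hy k).2
  have : μ F / 2 ≤ 0 := hle.trans ((measure_mono hI).trans hz.le)
  simp [h0] at this

/-- absolute value of the determinant of `n` vectors -/
def absdet {n : ℕ} (Y : Fin n → Vec n) : ℝ≥0∞ :=
  ENNReal.ofReal |(EuclideanSpace.basisFun (Fin n) ℝ).toBasis.det Y|

theorem absdet_measurable {n : ℕ} : Measurable (absdet (n := n)) := by
  unfold absdet
  apply ENNReal.measurable_ofReal.comp
  apply Measurable.abs
  show Measurable (fun Y => (EuclideanSpace.basisFun (Fin n) ℝ).toBasis.det Y)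
  simp only [Module.Basis.det_apply, Matrix.det_apply']
  refine Finset.measurable_sum _ fun σ _ => ?_
  refine Measurable.const_mul ?_ _
  refine Finset.measurable_prod _ fun i _ => ?_
  have : ∀ Y : Fin n → Vec n, (EuclideanSpace.basisFun (Fin n) ℝ).toBasis.toMatrix Y (σ i) i
      = Y i (σ i) := by
    intro Y; simp [Module.Basis.toMatrix_apply]
  simp only [this]
  fun_prop

theorem absdet_orthonormal {n : ℕ} (x : Fin n → Vec n) (hx : Orthonormal ℝ x) : absdet x = 1 := by
  have hc : Fintype.card (Fin n) = Module.finrank ℝ (Vec n) := by simp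
  let b : OrthonormalBasis (Fin n) ℝ (Vec n) :=
    OrthonormalBasis.mk hx (by
      rw [hx.linearIndependent.span_eq_top_of_card_eq_finrank' hc])
  have hb : ⇑b = x := by simp [b]
  have := (EuclideanSpace.basisFun (Fin n) ℝ).det_to_matrix_orthonormalBasis_real b
  rw [hb] at this
  unfold absdet
  rcases this with h | h <;> simp [Module.Basis.det_apply] at h ⊢ <;> simp [h]

/-- The component of `y` perpendicular to `x j`, `j ∈ s`. -/
def perp {n : ℕ} (s : Finset (Fin n)) (x : Fin n → Vec n) (y : Vec n) : Vec n :=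
  y - ∑ j ∈ s, ⟪x j, y⟫ • x j

theorem perp_inner {n : ℕ} (s : Finset (Fin n)) (x : Fin n → Vec n)
    (hx : Orthonormal ℝ (fun i : {i // i ∈ s} => x i)) (y : Vec n) (j : Fin n) (hj : j ∈ s) :
    ⟪x j, perp s x y⟫ = 0 := by
  rw [orthonormal_iff_ite] at hx
  unfold perp
  rw [inner_sub_right, inner_sum]
  have : ∀ i ∈ s, ⟪x j, ⟪x i, y⟫ • x i⟫ = if j = i then ⟪x j, y⟫ else 0 := by
    intro i hi
    rw [inner_smul_right]
    have := hx ⟨j, hj⟩ ⟨i, hi⟩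
    simp only [Subtype.mk.injEq] at this
    rw [this]
    split_ifs with h
    · rw [h]; simp
    · simp
  rw [Finset.sum_congr rfl this]
  simp [hj]

theorem absdet_perp {n : ℕ} (t : Finset (Fin n)) (w x : Fin n → Vec n) (i : Fin n) (hi : i ∉ t)
    (hw : ∀ j ∈ t, w j = x j) (y : Vec n) (hy : perp t x y ≠ 0) :
    absdet (Function.update w i y) = ENNReal.ofReal ‖perp t x y‖ *
      absdet (Function.update w i ((‖perp t x y‖)⁻¹ • perp t x y)) := by
  unfold absdet
  rw [← ENNReal.ofReal_mul (norm_nonneg _)]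
  congr 1
  set D := (EuclideanSpace.basisFun (Fin n) ℝ).toBasis.det
  have hne : ‖perp t x y‖ ≠ 0 := norm_ne_zero_iff.mpr hy
  have h1 : y = ‖perp t x y‖ • ((‖perp t x y‖)⁻¹ • perp t x y) + ∑ j ∈ t, ⟪x j, y⟫ • w j := by
    rw [smul_smul, mul_inv_cancel₀ hne, one_smul]
    have : ∑ j ∈ t, ⟪x j, y⟫ • w j = ∑ j ∈ t, ⟪x j, y⟫ • x j :=
      Finset.sum_congr rfl fun j hj => by rw [hw j hj]
    rw [this]; unfold perp; abel
  have h2 : D (Function.update w i (∑ j ∈ t, ⟪x j, y⟫ • w j)) = 0 := by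
    rw [AlternatingMap.map_update_sum]
    refine Finset.sum_eq_zero fun j hj => ?_
    rw [AlternatingMap.map_update_smul, AlternatingMap.map_update_self, smul_zero]
    rintro rfl; exact hi hj
  conv_lhs => rw [h1]
  rw [AlternatingMap.map_update_add, h2, add_zero, AlternatingMap.map_update_smul, smul_eq_mul, abs_mul,
    abs_norm]

theorem perp_null {n : ℕ} (t : Finset (Fin n)) (x : Fin n → Vec n) (i : Fin n) (hi : i ∉ t) :
    volume {y : Vec n | ‖perp t x y‖ ≤ 0} = 0 := by
  set W := Submodule.span ℝ ((t.image x : Finset (Vec n)) : Set (Vec n))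
  have hW : W ≠ ⊤ := by
    intro h
    have h1 := finrank_span_finset_le_card (R := ℝ) (t.image x)
    have h2 : Module.finrank ℝ W = n := by rw [h, finrank_top]; simp
    have h3 : (t.image x).card ≤ t.card := Finset.card_image_le
    have h4 : t.card < n := by
      have : t ⊂ Finset.univ := by
        rw [Finset.ssubset_univ_iff]; rintro rfl; simp at hi
      simpa using Finset.card_lt_card this
    have h5 : Module.finrank ℝ W ≤ (t.image x).card := h1
    omega
  refine measure_mono_null ?_ (Measure.addHaar_submodule volume W hW)
  intro y hy
  have : perp t x y = 0 := norm_le_zero_iff.mp hy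
  have h1 : y = ∑ j ∈ t, ⟪x j, y⟫ • x j := sub_eq_zero.mp this
  show y ∈ W
  rw [h1]
  refine Submodule.sum_mem _ fun j hj => Submodule.smul_mem _ _ (Submodule.subset_span ?_)
  simp only [Finset.coe_image]
  exact Set.mem_image_of_mem _ hj

theorem lemE_aux {n : ℕ} (s : Finset (Fin n)) : ∃ C : ℝ≥0∞, C ≠ ⊤ ∧
    ∀ (F F1 : Set (Vec n)), MeasurableSet F → MeasurableSet F1 → F1 ⊆ F →
    volume F1 ≠ 0 → volume F ≠ ⊤ → ∀ x : Fin n → Vec n,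
    (Orthonormal ℝ (fun i : {i // i ∈ sᶜ} => x i)) →
    ∃ (e : Fin n → Vec n) (r : Fin n → ℝ), Orthonormal ℝ e ∧ (∀ i ∈ sᶜ, e i = x i) ∧
      (∀ i, 0 < r i) ∧
      volume F1 ≤ 2 ^ s.card * volume (F1 ∩ {y | ∀ i ∈ s, |⟪y, e i⟫| ≤ r i}) ∧
      (∏ i ∈ s, ENNReal.ofReal (r i)) * volume F1 ^ s.card ≤
        C * lmarginal (fun _ => volume.restrict F) s absdet x := by
  induction s using Finset.induction_on with
  | empty =>
    refine ⟨1, by simp, ?_⟩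
    intro F F1 hF hF1 hsub h0 h1 x hx
    have hx' : Orthonormal ℝ x := by
      have := hx.comp (fun i : Fin n => (⟨i, by simp⟩ : {i // i ∈ (∅ : Finset (Fin n))ᶜ}))
        (fun a b h => by simpa using h)
      exact this
    refine ⟨x, fun _ => 1, hx', fun _ _ => rfl, fun _ => one_pos, ?_, ?_⟩
    · simp
    · simp [absdet_orthonormal x hx']
  | insert i s hi ih =>
    obtain ⟨C, hC, ih⟩ := ih
    refine ⟨2 ^ (s.card + 2) * C, ENNReal.mul_ne_top (by simp) hC, ?_⟩
    intro F F1 hF hF1 hsub h0 h1 x hx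
    set t := (insert i s)ᶜ with ht
    have hit : i ∉ t := by simp [ht]
    have hst : ∀ j ∈ t, j ∉ s := by intro j hj; simp [ht] at hj; tauto
    have hstc : ∀ j ∈ sᶜ, j ≠ i → j ∈ t := by
      intro j hj hji; simp [ht] at hj ⊢; tauto
    have hF1t : volume F1 ≠ ⊤ := ne_top_of_le_ne_top h1 (measure_mono hsub)
    have hNmeas : Measurable (fun y => ‖perp t x y‖) := by
      unfold perp; fun_prop
    obtain ⟨r, hr, hm1, hm2⟩ := median_lemma volume F1 hF1 h0 hF1t (fun y => ‖perp t x y‖) hNmeas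
      (measure_mono_null Set.inter_subset_right (perp_null t x i hit))
    set F1' := F1 ∩ {y | ‖perp t x y‖ ≤ r} with hF1'
    set F2 := F1 ∩ {y | r / 2 < ‖perp t x y‖} with hF2
    have hF1'm : MeasurableSet F1' := hF1.inter (measurableSet_le hNmeas measurable_const)
    have hF2m : MeasurableSet F2 := hF1.inter (measurableSet_lt measurable_const hNmeas)
    have hF1'0 : volume F1' ≠ 0 := by
      intro h; rw [h] at hm1; simp at hm1; exact h0 hm1
    have hF20 : volume F2 ≠ 0 := by
      intro h; rw [h] at hm2; simp at hm2; exact h0 hm2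
    have hF2t : volume F2 ≠ ⊤ := ne_top_of_le_ne_top hF1t (measure_mono Set.inter_subset_left)
    set J : Vec n → ℝ≥0∞ := fun y =>
      lmarginal (fun _ => volume.restrict F) s absdet (Function.update x i y) with hJ
    have hJm : Measurable J := (absdet_measurable.lmarginal _).comp (measurable_update x)
    obtain ⟨y, hyF2, hy⟩ := exists_le_setLAverage (μ := volume) hF20 hF2t hJm.aemeasurable.restrict
    have hJy : J y * volume F2 ≤ ∫⁻ y in F, J y := by
      rw [setLAverage_eq] at hy
      calc J y * volume F2 ≤ (∫⁻ a in F2, J a) / volume F2 * volume F2 := by gcongr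
        _ ≤ ∫⁻ a in F2, J a := by rw [ENNReal.div_mul_cancel hF20 hF2t]
        _ ≤ _ := lintegral_mono_set (Set.inter_subset_left.trans hsub)
    have hNy : r / 2 < ‖perp t x y‖ := hyF2.2
    have hpos : 0 < ‖perp t x y‖ := by linarith
    have hpne : perp t x y ≠ 0 := norm_pos_iff.mp hpos
    set u := (‖perp t x y‖)⁻¹ • perp t x y with hu
    have hJu : J y = ENNReal.ofReal ‖perp t x y‖ * J u := by
      simp only [hJ]
      rw [lmarginal, lmarginal, ← lintegral_const_mul' _ _ ENNReal.ofReal_ne_top]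
      refine lintegral_congr fun Z => ?_
      have hup : ∀ v : Vec n, Function.updateFinset (Function.update x i v) s Z =
          Function.update (Function.updateFinset x s Z) i v := by
        intro v
        funext j
        by_cases hji : j = i
        · subst hji; simp [Function.updateFinset, hi]
        · simp [Function.updateFinset, Function.update_of_ne hji]
      rw [hup, hup]
      exact absdet_perp t _ x i hit (fun j hj => by simp [Function.updateFinset, hst j hj]) y hpne
    have hunorm : ‖u‖ = 1 := by
      rw [hu, norm_smul, norm_inv, norm_norm, inv_mul_cancel₀ hpos.ne']
    have huperp : ∀ j ∈ t, ⟪x j, u⟫ = 0 := by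
      intro j hj
      rw [hu, inner_smul_right, perp_inner t x hx y j hj, mul_zero]
    set x' := Function.update x i u with hx'
    have hx'o : Orthonormal ℝ (fun i : {i // i ∈ sᶜ} => x' i) := by
      rw [orthonormal_iff_ite] at hx ⊢
      rintro ⟨a, ha⟩ ⟨b, hb⟩
      simp only [Subtype.mk.injEq]
      by_cases hai : a = i
      · subst hai
        by_cases hbi : b = a
        · subst hbi; simp [hx', hunorm]
        · rw [if_neg (Ne.symm hbi), hx', Function.update_self, Function.update_of_ne hbi,
            real_inner_comm, huperp b (hstc b hb hbi)]
      · by_cases hbi : b = i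
        · subst hbi
          rw [if_neg hai, hx', Function.update_self, Function.update_of_ne hai,
            huperp a (hstc a ha hai)]
        · have := hx ⟨a, hstc a ha hai⟩ ⟨b, hstc b hb hbi⟩
          simpa [hx', Function.update_of_ne hai, Function.update_of_ne hbi] using this
    obtain ⟨e, r', he, hex, hr', hvol, hprod⟩ := ih F F1' hF hF1'm (Set.inter_subset_left.trans hsub)
      hF1'0 h1 x' hx'o
    have hei : e i = u := by rw [hex i (by simp [hi])]; simp [hx']
    refine ⟨e, Function.update r' i r, he, ?_, ?_, ?_, ?_⟩
    · intro j hj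
      have hji : j ≠ i := by rintro rfl; exact hit hj
      rw [hex j (by simpa using hst j hj), hx', Function.update_of_ne hji]
    · intro j
      by_cases hji : j = i
      · subst hji; simpa using hr
      · rw [Function.update_of_ne hji]; exact hr' j
    · rw [Finset.card_insert_of_notMem hi, pow_succ', mul_assoc]
      refine hm1.trans ?_
      gcongr
      refine hvol.trans (mul_le_mul' le_rfl (measure_mono ?_))
      rintro w ⟨⟨hw1, hw2⟩, hw3⟩
      refine ⟨hw1, ?_⟩
      intro j hj
      by_cases hji : j = i
      · subst hji
        rw [Function.update_self, hei]
        have h3 : ⟪w, u⟫ = ⟪perp t x w, u⟫ := by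
          unfold perp
          rw [inner_sub_left, sum_inner]
          rw [Finset.sum_eq_zero, sub_zero]
          intro k hk
          rw [inner_smul_left, huperp k hk, mul_zero]
        rw [h3]
        calc |⟪perp t x w, u⟫| ≤ ‖perp t x w‖ * ‖u‖ := abs_real_inner_le_norm _ _
          _ ≤ r := by rw [hunorm, mul_one]; exact hw2
      · rw [Function.update_of_ne hji]
        exact hw3 j ((Finset.mem_insert.mp hj).resolve_left hji)
    · rw [lmarginal_insert _ absdet_measurable hi, Finset.card_insert_of_notMem hi,
        Finset.prod_insert hi, Function.update_self]
      have hpr : ∏ j ∈ s, ENNReal.ofReal (Function.update r' i r j) = ∏ j ∈ s, ENNReal.ofReal (r' j) :=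
        Finset.prod_congr rfl fun j hj => by
          rw [Function.update_of_ne]; rintro rfl; exact hi hj
      rw [hpr]
      have hrJ : ENNReal.ofReal r * J u ≤ 2 * J y := by
        rw [hJu, ← mul_assoc]
        gcongr
        calc ENNReal.ofReal r ≤ ENNReal.ofReal (2 * ‖perp t x y‖) :=
              ENNReal.ofReal_le_ofReal (by linarith)
          _ = _ := by rw [ENNReal.ofReal_mul (by norm_num)]; simp
      have hprod' : (∏ i ∈ s, ENNReal.ofReal (r' i)) * volume F1' ^ s.card ≤ C * J u := hprod
      calc ENNReal.ofReal r * (∏ j ∈ s, ENNReal.ofReal (r' j)) * volume F1 ^ (s.card + 1)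
          = ENNReal.ofReal r * (∏ j ∈ s, ENNReal.ofReal (r' j)) * volume F1 ^ s.card * volume F1 := by
            ring
        _ ≤ ENNReal.ofReal r * (∏ j ∈ s, ENNReal.ofReal (r' j)) * (2 * volume F1') ^ s.card *
            (2 * volume F2) := by gcongr
        _ = 2 ^ (s.card + 1) * ENNReal.ofReal r * ((∏ j ∈ s, ENNReal.ofReal (r' j)) *
            volume F1' ^ s.card) * volume F2 := by ring
        _ ≤ 2 ^ (s.card + 1) * ENNReal.ofReal r * (C * J u) * volume F2 := by gcongr
        _ = 2 ^ (s.card + 1) * C * (ENNReal.ofReal r * J u) * volume F2 := by ring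
        _ ≤ 2 ^ (s.card + 1) * C * (2 * J y) * volume F2 := by gcongr
        _ = 2 ^ (s.card + 2) * C * (J y * volume F2) := by ring
        _ ≤ _ := by gcongr

theorem lemE (n : ℕ) : ∃ C : ℝ≥0∞, C ≠ ⊤ ∧
    ∀ (F : Set (Vec n)), MeasurableSet F → volume F ≠ 0 → volume F ≠ ⊤ →
    ∃ (e : OrthonormalBasis (Fin n) ℝ (Vec n)) (r : Fin n → ℝ), (∀ i, 0 < r i) ∧
      volume F ≤ 2 ^ n * volume (F ∩ {y | ∀ i, |⟪y, e i⟫| ≤ r i}) ∧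
      (∏ i, ENNReal.ofReal (r i)) * volume F ^ n ≤
        C * ∫⁻ Y : Fin n → Vec n, (Set.pi Set.univ (fun _ => F)).indicator absdet Y := by
  obtain ⟨C, hC, h⟩ := lemE_aux (n := n) Finset.univ
  refine ⟨C, hC, fun F hF h0 h1 => ?_⟩
  obtain ⟨e, r, he, -, hr, hv, hp⟩ := h F F hF hF subset_rfl h0 h1 (fun _ => 0) (by
    rw [orthonormal_iff_ite]; rintro ⟨a, ha⟩; simp at ha)
  have hc : Fintype.card (Fin n) = Module.finrank ℝ (Vec n) := by simp
  let b : OrthonormalBasis (Fin n) ℝ (Vec n) :=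
    OrthonormalBasis.mk he (by
      rw [he.linearIndependent.span_eq_top_of_card_eq_finrank' hc])
  have hb : ⇑b = e := by simp [b]
  refine ⟨b, r, hr, ?_, ?_⟩
  · rw [hb]; simpa using hv
  · rw [lmarginal_univ] at hp
    rw [lintegral_indicator (MeasurableSet.univ_pi fun _ => hF), volume_pi, Measure.restrict_pi_pi]
    simpa using hp

theorem rearr_mp {A B C : Type*} [MeasureSpace A] [MeasureSpace B] [MeasureSpace C]
    [SFinite (volume : Measure A)] [SFinite (volume : Measure B)] [SFinite (volume : Measure C)] :
    MeasurePreserving (fun z : (A × B) × C => ((z.1.1, z.2), z.1.2)) volume volume := by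
  have h1 : MeasurePreserving (MeasurableEquiv.prodAssoc : (A × B) × C ≃ᵐ A × B × C) volume volume :=
    measurePreserving_prodAssoc volume volume volume
  have h2 : MeasurePreserving (Prod.map (id : A → A) (Prod.swap : B × C → C × B)) volume volume :=
    (MeasurePreserving.id volume).prod (Measure.measurePreserving_swap (μ := (volume : Measure B)) (ν := (volume : Measure C)))
  have h3 : MeasurePreserving (MeasurableEquiv.prodAssoc : (A × C) × B ≃ᵐ A × C × B).symm volume volume :=
    (measurePreserving_prodAssoc volume volume volume).symm
  exact (h3.comp h2).comp h1

/-- `((x,u),y) ↦ ((y, u + 2 x·y), x)` -/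
def dualM {n : ℕ} (z : Pt n × Vec n) : Pt n × Vec n := ((z.2, z.1.2 + 2 * ⟪z.1.1, z.2⟫), z.1.1)
/-- `((y,v),x) ↦ ((x, v - 2 x·y), y)` -/
def dualI {n : ℕ} (z : Pt n × Vec n) : Pt n × Vec n := ((z.2, z.1.2 - 2 * ⟪z.2, z.1.1⟫), z.1.1)

theorem dualI_dualM {n : ℕ} (z : Pt n × Vec n) : dualI (dualM z) = z := by
  simp [dualI, dualM]

theorem skew_aux {n : ℕ} (g : Vec n × Vec n → ℝ) (hg : Measurable g) :
    MeasurePreserving (fun z : Pt n × Vec n => (((z.2, z.1.2 + g (z.1.1, z.2)), z.1.1) : Pt n × Vec n))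
      volume volume := by
  have h1 : MeasurePreserving (fun z : Pt n × Vec n => ((z.1.1, z.2), z.1.2)) volume volume := rearr_mp
  have h2 : MeasurePreserving (fun z : (Vec n × Vec n) × ℝ => (z.1, z.2 + g z.1)) volume volume := by
    have := MeasurePreserving.skew_product (μa := (volume : Measure (Vec n × Vec n)))
      (μb := (volume : Measure (Vec n × Vec n))) (μc := (volume : Measure ℝ)) (μd := (volume : Measure ℝ))
      (f := id) (MeasurePreserving.id _) (g := fun a c => c + g a) (by unfold Function.uncurry; fun_prop)
      (Filter.Eventually.of_forall fun a => (measurePreserving_add_right volume (g a)).map_eq)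
    exact this
  have h3 : MeasurePreserving (fun z : (Vec n × Vec n) × ℝ => (z.1.swap, z.2)) volume volume :=
    (Measure.measurePreserving_swap (μ := (volume : Measure (Vec n))) (ν := (volume : Measure (Vec n)))).prod
      (MeasurePreserving.id volume)
  have h4 : MeasurePreserving (fun z : (Vec n × Vec n) × ℝ => ((z.1.1, z.2), z.1.2)) volume volume := rearr_mp
  exact (h4.comp h3).comp (h2.comp h1)

theorem dualM_mp {n : ℕ} : MeasurePreserving (dualM (n := n)) volume volume :=
  skew_aux (fun w => 2 * ⟪w.1, w.2⟫) (by fun_prop)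

theorem dualI_mp {n : ℕ} : MeasurePreserving (dualI (n := n)) volume volume := by
  have := skew_aux (n := n) (fun w => -(2 * ⟪w.2, w.1⟫)) (by fun_prop)
  exact this

theorem refine_lemma {A B : Type*} [MeasurableSpace A] [MeasurableSpace B] (μ : Measure A)
    (ν : Measure B) [SFinite μ] [SFinite ν] (G : Set (A × B)) (hG : MeasurableSet G) (E : Set A)
    (hGE : ∀ z ∈ G, z.1 ∈ E) (t : ℝ≥0∞) :
    MeasurableSet {z | z ∈ G ∧ t ≤ ν (Prod.mk z.1 ⁻¹' G)} ∧
    μ.prod ν G ≤ μ.prod ν {z | z ∈ G ∧ t ≤ ν (Prod.mk z.1 ⁻¹' G)} + t * μ E := by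
  have hf : Measurable (fun p => ν (Prod.mk p ⁻¹' G)) := measurable_measure_prodMk_left hG
  have hm : MeasurableSet {z : A × B | z ∈ G ∧ t ≤ ν (Prod.mk z.1 ⁻¹' G)} :=
    hG.inter (measurableSet_le measurable_const (hf.comp measurable_fst))
  refine ⟨hm, ?_⟩
  set Gt := {z : A × B | z ∈ G ∧ t ≤ ν (Prod.mk z.1 ⁻¹' G)}
  have h1 : μ.prod ν G ≤ μ.prod ν Gt + μ.prod ν (G \ Gt) := by
    refine (measure_mono ?_).trans (measure_union_le _ _)
    intro z hz
    by_cases h : z ∈ Gt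
    · exact Or.inl h
    · exact Or.inr ⟨hz, h⟩
  refine h1.trans (add_le_add le_rfl ?_)
  rw [Measure.prod_apply (hG.diff hm)]
  refine le_trans (lintegral_mono (g := E.indicator (fun _ => t)) ?_) (lintegral_indicator_const_le _ _)
  intro p
  by_cases hp : p ∈ E
  · rw [Set.indicator_of_mem hp]
    by_cases h : t ≤ ν (Prod.mk p ⁻¹' G)
    · have : Prod.mk p ⁻¹' (G \ Gt) = ∅ := by
        ext y; simp [Gt]; intro _; exact h
      simp [this]
    · exact (measure_mono (Set.preimage_mono Set.sdiff_subset)).trans (not_le.mp h).le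
  · have : Prod.mk p ⁻¹' (G \ Gt) = ∅ := by
      ext y; simp; intro h; exact absurd (hGE _ h) hp
    simp [this]

theorem det_step {n : ℕ} (Y : Fin n → Vec n) (S : Set (Fin n → ℝ)) (hS : MeasurableSet S) :
    absdet Y * volume {x : Vec n | (fun i => 2 * ⟪x, Y i⟫) ∈ S} ≤ volume S := by
  set M : Matrix (Fin n) (Fin n) ℝ := Matrix.of fun i j => 2 * Y i j with hM
  have hlin : ∀ x : Fin n → ℝ, Matrix.toLin' M x = fun i => 2 * ⟪(WithLp.toLp 2 x : Vec n), Y i⟫ := by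
    intro x; funext i
    simp [Matrix.toLin'_apply, hM, Matrix.mulVec, dotProduct, PiLp.inner_apply, Finset.mul_sum, mul_assoc]
  have hdet : LinearMap.det (Matrix.toLin' M) =
      2 ^ n * (EuclideanSpace.basisFun (Fin n) ℝ).toBasis.det Y := by
    rw [LinearMap.det_toLin', Module.Basis.det_apply, ← Matrix.det_transpose]
    have : M.transpose = (2 : ℝ) • (EuclideanSpace.basisFun (Fin n) ℝ).toBasis.toMatrix Y := by
      ext i j; simp [hM, Module.Basis.toMatrix_apply]
    rw [this, Matrix.det_smul]; simp
  have hA : volume {x : Vec n | (fun i => 2 * ⟪x, Y i⟫) ∈ S} =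
      volume ((Matrix.toLin' M) ⁻¹' S) := by
    rw [← (PiLp.volume_preserving_ofLp (Fin n)).measure_preimage]
    · congr 1
      ext x
      simp only [Set.mem_ofPred_eq, Set.mem_preimage, hlin]
    · apply MeasurableSet.nullMeasurableSet
      have : Measurable (Matrix.toLin' M) := (LinearMap.continuous_of_finiteDimensional _).measurable
      exact this hS
  rw [hA]
  calc absdet Y * volume ((Matrix.toLin' M) ⁻¹' S)
      ≤ ENNReal.ofReal |LinearMap.det (Matrix.toLin' M)| * volume ((Matrix.toLin' M) ⁻¹' S) := by
        gcongr
        unfold absdet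
        apply ENNReal.ofReal_le_ofReal
        rw [hdet, abs_mul]
        have : (1 : ℝ) ≤ |(2 : ℝ) ^ n| := by
          rw [abs_of_pos (by positivity)]; exact one_le_pow₀ (by norm_num)
        nlinarith [abs_nonneg ((EuclideanSpace.basisFun (Fin n) ℝ).toBasis.det Y)]
    _ = volume ((Matrix.toLin' M) '' ((Matrix.toLin' M) ⁻¹' S)) := by
        rw [Measure.addHaar_image_linearMap]
    _ ≤ _ := measure_mono (Set.image_preimage_subset _ _)

theorem pi_translate {n : ℕ} (Es : Set (Pt n)) (hEs : MeasurableSet Es) (q : Pt n) :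
    ∫⁻ Y : Fin n → Vec n, volume {w : Fin n → ℝ | ∀ i, (Y i + q.1, q.2 + w i) ∈ Es} = volume Es ^ n := by
  set P : Set (Fin n → Pt n) := Set.pi Set.univ (fun _ => (fun p : Pt n => p + q) ⁻¹' Es) with hP
  have hPm : MeasurableSet P := MeasurableSet.univ_pi fun i => (measurable_add_const q) hEs
  have h1 : volume P = volume Es ^ n := by
    rw [hP, volume_pi_pi]
    have h2 : volume ((fun p : Pt n => p + q) ⁻¹' Es) = volume Es := by
      have : (volume : Measure (Pt n)).IsAddRightInvariant := by
        rw [Measure.volume_eq_prod]; infer_instance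
      exact measure_preimage_add_right volume q Es
    simp [h2]
  rw [← h1]
  have hmp : MeasurePreserving (MeasurableEquiv.arrowProdEquivProdArrow (Vec n) ℝ (Fin n)) volume volume :=
    volume_measurePreserving_arrowProdEquivProdArrow (Vec n) ℝ (Fin n)
  rw [← hmp.symm.measure_preimage_equiv]
  rw [Measure.volume_eq_prod, Measure.prod_apply]
  · congr 1; funext Y; congr 1
    ext w
    simp [hP, MeasurableEquiv.arrowProdEquivProdArrow, Equiv.arrowProdEquivProdArrow, add_comm]
    constructor
    · intro h i; exact h i
    · intro h i; exact h i
  · exact (MeasurableEquiv.measurable _) hPm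

theorem ineqI {n : ℕ} (Es : Set (Pt n)) (hEs : MeasurableSet Es) (G : Set (Pt n × Vec n))
    (hG : MeasurableSet G) (hGE : ∀ z ∈ G, (dualM z).1 ∈ Es) :
    ∫⁻ z in G, (∫⁻ Y : Fin n → Vec n,
      (Set.pi Set.univ (fun _ => {w : Vec n | (z.1, w + z.2) ∈ G})).indicator absdet Y) ≤ volume Es ^ (n+1) := by
  set Φ : Pt n × Vec n → ℝ≥0∞ := fun z => Es.indicator 1 z.1 * ∫⁻ Y : Fin n → Vec n,
     ({Y : Fin n → Vec n | ∀ i, (Y i + z.1.1, z.1.2 + 2 * ⟪z.2, Y i⟫) ∈ Es}).indicator absdet Y with hΦ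
  have hSm : MeasurableSet {p : (Pt n × Vec n) × (Fin n → Vec n) |
      ∀ i, (p.2 i + p.1.1.1, p.1.1.2 + 2 * ⟪p.1.2, p.2 i⟫) ∈ Es} := by
    have : {p : (Pt n × Vec n) × (Fin n → Vec n) |
      ∀ i, (p.2 i + p.1.1.1, p.1.1.2 + 2 * ⟪p.1.2, p.2 i⟫) ∈ Es} = ⋂ i, 
       (fun p : (Pt n × Vec n) × (Fin n → Vec n) => (p.2 i + p.1.1.1, p.1.1.2 + 2 * ⟪p.1.2, p.2 i⟫)) ⁻¹' Es := by
      ext p; simp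
    rw [this]
    refine MeasurableSet.iInter fun i => ?_
    have hm : Measurable (fun p : (Pt n × Vec n) × (Fin n → Vec n) => ((p.2 i + p.1.1.1, p.1.1.2 + 2 * ⟪p.1.2, p.2 i⟫) : Pt n)) := by
      have h1 : Measurable (fun p : (Pt n × Vec n) × (Fin n → Vec n) => p.2 i) := (measurable_pi_apply i).comp measurable_snd
      fun_prop
    exact hm hEs
  have hJm : Measurable (fun p : (Pt n × Vec n) × (Fin n → Vec n) =>
      ({Y : Fin n → Vec n | ∀ i, (Y i + p.1.1.1, p.1.1.2 + 2 * ⟪p.1.2, Y i⟫) ∈ Es}).indicator absdet p.2) := by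
    have := Measurable.indicator (f := fun p : (Pt n × Vec n) × (Fin n → Vec n) => absdet p.2) (absdet_measurable.comp measurable_snd) hSm
    exact this
  have hΦm : Measurable Φ := by
    refine Measurable.mul ?_ ?_
    · exact (measurable_one.indicator hEs).comp measurable_fst
    · exact Measurable.lintegral_prod_right' hJm
  calc _ ≤ ∫⁻ z in G, Φ (dualM z) := by
        refine lintegral_mono_ae ?_
        filter_upwards [ae_restrict_mem hG] with z hz
        rw [hΦ]
        simp only
        rw [Set.indicator_of_mem (hGE z hz)]
        simp only [Pi.one_apply, one_mul]
        refine lintegral_mono fun Y => ?_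
        refine Set.indicator_le_indicator_of_subset ?_ (fun _ => zero_le) Y
        intro Y hY i
        have := hGE _ (hY i (Set.mem_univ i))
        simp only [dualM] at this ⊢
        convert this using 2
        rw [inner_add_right]; ring
    _ ≤ ∫⁻ z, Φ (dualM z) := setLIntegral_le_lintegral _ _
    _ = ∫⁻ z, Φ z := dualM_mp.lintegral_comp hΦm
    _ = ∫⁻ q, ∫⁻ x, Φ (q, x) := by
        rw [Measure.volume_eq_prod, lintegral_prod _ hΦm.aemeasurable]
    _ ≤ ∫⁻ q, Es.indicator (fun _ => volume Es ^ n) q := by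
        refine lintegral_mono fun q => ?_
        by_cases hq : q ∈ Es
        · simp only [hΦ, Set.indicator_of_mem hq, Pi.one_apply, one_mul]
          rw [lintegral_lintegral_swap]
          · rw [← pi_translate Es hEs q]
            refine lintegral_mono fun Y => ?_
            have hSY : MeasurableSet {w : Fin n → ℝ | ∀ i, (Y i + q.1, q.2 + w i) ∈ Es} := by
              have : {w : Fin n → ℝ | ∀ i, (Y i + q.1, q.2 + w i) ∈ Es} =
                 ⋂ i, (fun w : Fin n → ℝ => ((Y i + q.1, q.2 + w i) : Pt n)) ⁻¹' Es := by ext; simp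
              rw [this]
              refine MeasurableSet.iInter fun i => ?_
              have : Measurable (fun w : Fin n → ℝ => ((Y i + q.1, q.2 + w i) : Pt n)) := by fun_prop
              exact this hEs
            refine le_trans (le_of_eq ?_) (det_step Y _ hSY)
            have hxm : MeasurableSet {x : Vec n | (fun i => 2 * ⟪x, Y i⟫) ∈ {w : Fin n → ℝ | ∀ i, (Y i + q.1, q.2 + w i) ∈ Es}} := by
              have : Measurable (fun x : Vec n => (fun i => 2 * ⟪x, Y i⟫)) := by fun_prop
              exact this hSY
            rw [← lintegral_indicator_const hxm]
            rfl
          · have : Measurable (fun p : Vec n × (Fin n → Vec n) => (((q, p.1), p.2) : (Pt n × Vec n) × (Fin n → Vec n))) := by fun_prop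
            exact (hJm.comp this).aemeasurable
        · simp [hΦ, hq]
    _ = volume Es ^ (n+1) := by
        rw [lintegral_indicator_const hEs]; ring

theorem dualM_dualI {n : ℕ} (z : Pt n × Vec n) : dualM (dualI z) = z := by
  simp [dualI, dualM]

theorem refine_dual {n : ℕ} (G : Set (Pt n × Vec n)) (hG : MeasurableSet G) (Es : Set (Pt n))
    (hGE : ∀ z ∈ G, (dualM z).1 ∈ Es) (t : ℝ≥0∞) :
    MeasurableSet {z | z ∈ G ∧ t ≤ volume {x : Vec n | dualI ((dualM z).1, x) ∈ G}} ∧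
    volume G ≤ volume {z | z ∈ G ∧ t ≤ volume {x : Vec n | dualI ((dualM z).1, x) ∈ G}} + t * volume Es := by
  have hD : MeasurableSet (dualI ⁻¹' G) := dualI_mp.measurable hG
  obtain ⟨h1, h2⟩ := refine_lemma volume volume (dualI ⁻¹' G) hD Es (by
    intro q hq
    have := hGE _ hq
    rwa [dualM_dualI] at this) t
  have hset : {z | z ∈ G ∧ t ≤ volume {x : Vec n | dualI ((dualM z).1, x) ∈ G}} =
      dualM ⁻¹' {z : Pt n × Vec n | z ∈ dualI ⁻¹' G ∧ t ≤ volume (Prod.mk z.1 ⁻¹' (dualI ⁻¹' G))} := by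
    ext z
    simp only [Set.mem_ofPred_eq, Set.mem_preimage, dualI_dualM]
    rfl
  rw [hset]
  refine ⟨dualM_mp.measurable h1, ?_⟩
  rw [dualM_mp.measure_preimage h1.nullMeasurableSet]
  rw [← dualI_mp.measure_preimage hG.nullMeasurableSet]
  exact h2

/-- points of `G` whose fibre is large -/
def Gp {n : ℕ} (G : Set (Pt n × Vec n)) (t : ℝ) : Set (Pt n × Vec n) :=
  {z | z ∈ G ∧ ENNReal.ofReal t ≤ volume (Prod.mk z.1 ⁻¹' G)}

theorem ofReal_sub_half {x : ℝ≥0∞} {p q r : ℝ} (hq : 0 ≤ q) (hr : 0 ≤ r) (h : ENNReal.ofReal p ≤ x + ENNReal.ofReal q)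
    (hp : p = r + q) : ENNReal.ofReal r ≤ x := by
  rw [hp, ENNReal.ofReal_add hr hq] at h
  exact (ENNReal.add_le_add_iff_right ENNReal.ofReal_ne_top).mp h

theorem step1 (n : ℕ) : ∃ C : ℝ, 0 < C ∧ ∀ (E Es : Set (Pt n)) (G : Set (Pt n × Vec n)) (a b τ : ℝ),
    0 < a → 0 < b → 0 < τ → MeasurableSet Es → MeasurableSet G →
    volume E = ENNReal.ofReal a → volume Es = ENNReal.ofReal b → volume G = ENNReal.ofReal τ →
    (∀ z ∈ G, z.1 ∈ E) → (∀ z ∈ G, (dualM z).1 ∈ Es) →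
    ∃ (x0 : Vec n) (u0 : ℝ) (y0 : Vec n) (e : OrthonormalBasis (Fin n) ℝ (Vec n)) (s : Fin n → ℝ)
      (F : Set (Vec n)), MeasurableSet F ∧ (∀ i, 0 < s i) ∧ (∀ w ∈ F, ∀ i, |⟪w, e i⟫| ≤ s i) ∧
      ENNReal.ofReal (τ / (2^(n+3) * a)) ≤ volume F ∧
      ∏ i, s i ≤ C * (a^n * b^(n+1) / τ^(n+1)) ∧
      ∀ w ∈ F, ENNReal.ofReal (τ / (4 * b)) ≤
        volume {x : Vec n | (((x, u0 - 2 * ⟪x - x0, w + y0⟫), w + y0) : Pt n × Vec n) ∈ Gp G (τ / (4 * a))} := by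
  obtain ⟨C0, hC0, hE⟩ := lemE n
  refine ⟨(C0.toReal + 1) * (4 * 8 ^ n), by positivity, ?_⟩
  intro E Es G a b τ ha hb hτ hEs hG vE vEs vG hGE hGEs
  obtain ⟨m1, v1⟩ := refine_lemma volume volume G hG E hGE (ENNReal.ofReal (τ / (4 * a)))
  set G1 := Gp G (τ / (4 * a)) with hG1
  change MeasurableSet G1 at m1
  change volume G ≤ volume G1 + _ at v1
  have v1' : ENNReal.ofReal (3 * τ / 4) ≤ volume G1 := by
    rw [vG, vE, ← ENNReal.ofReal_mul (by positivity)] at v1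
    refine ofReal_sub_half (by positivity) (by positivity) v1 (by field_simp; norm_num)
  have hG1G : G1 ⊆ G := fun z hz => hz.1
  obtain ⟨m2, v2⟩ := refine_dual G1 m1 Es (fun z hz => hGEs z (hG1G hz)) (ENNReal.ofReal (τ / (4 * b)))
  set G2 := {z | z ∈ G1 ∧ ENNReal.ofReal (τ / (4 * b)) ≤ volume {x : Vec n | dualI ((dualM z).1, x) ∈ G1}} with hG2
  have v2' : ENNReal.ofReal (τ / 2) ≤ volume G2 := by
    have := v1'.trans v2
    rw [vEs, ← ENNReal.ofReal_mul (by positivity)] at this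
    refine ofReal_sub_half (by positivity) (by positivity) this (by field_simp; norm_num)
  have hG2G : G2 ⊆ G := fun z hz => hG1G hz.1
  obtain ⟨m3, v3⟩ := refine_lemma volume volume G2 m2 E (fun z hz => hGE z (hG2G hz)) (ENNReal.ofReal (τ / (8 * a)))
  set G3 := {z | z ∈ G2 ∧ ENNReal.ofReal (τ / (8 * a)) ≤ volume (Prod.mk z.1 ⁻¹' G2)} with hG3
  change volume G2 ≤ volume G3 + _ at v3
  have v3' : ENNReal.ofReal (3 * τ / 8) ≤ volume G3 := by
    have := v2'.trans v3
    rw [vE, ← ENNReal.ofReal_mul (by positivity)] at this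
    refine ofReal_sub_half (by positivity) (by positivity) this (by field_simp; norm_num)
  have hG3G : G3 ⊆ G := fun z hz => hG2G hz.1
  have hI := ineqI Es hEs G2 m2 (fun z hz => hGEs z (hG2G hz))
  set φ : Pt n × Vec n → ℝ≥0∞ := fun z => ∫⁻ Y : Fin n → Vec n,
      (Set.pi Set.univ (fun _ => {w : Vec n | (z.1, w + z.2) ∈ G2})).indicator absdet Y with hφ
  have hfin : ∀ᵐ z : Pt n × Vec n, volume (Prod.mk z.1 ⁻¹' G2) < ⊤ := by
    have h1 : ∀ᵐ p : Pt n, volume (Prod.mk p ⁻¹' G2) < ⊤ := by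
      refine Measure.ae_measure_lt_top m2 ?_
      have : volume G2 ≤ volume G := measure_mono hG2G
      rw [vG] at this
      exact (this.trans_lt ENNReal.ofReal_lt_top).ne
    exact (Measure.quasiMeasurePreserving_fst (μ := (volume : Measure (Pt n))) (ν := (volume : Measure (Vec n)))).ae h1
  have hex : ∃ z0 ∈ G3, volume (Prod.mk z0.1 ⁻¹' G2) < ⊤ ∧ φ z0 ≤ ENNReal.ofReal (4 * b^(n+1) / τ) := by
    by_contra! hcon
    have h1 : ENNReal.ofReal (4 * b^(n+1) / τ) * ENNReal.ofReal (3 * τ / 8) ≤ ENNReal.ofReal (b ^ (n+1)) := by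
      calc _ ≤ ENNReal.ofReal (4 * b^(n+1) / τ) * volume G3 := mul_le_mul' le_rfl v3'
        _ = ∫⁻ z in G3, ENNReal.ofReal (4 * b^(n+1) / τ) := by rw [setLIntegral_const]
        _ ≤ ∫⁻ z in G3, φ z := by
            refine lintegral_mono_ae ?_
            filter_upwards [ae_restrict_mem m3, ae_restrict_of_ae hfin] with z hz hz2
            exact (hcon z hz hz2).le
        _ ≤ ∫⁻ z in G2, φ z := lintegral_mono_set fun z hz => hz.1
        _ ≤ _ := hI
        _ = _ := by rw [vEs, ENNReal.ofReal_pow hb.le]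
    rw [← ENNReal.ofReal_mul (by positivity), ENNReal.ofReal_le_ofReal_iff (by positivity)] at h1
    have h2 : 4 * b^(n+1) / τ * (3 * τ / 8) = 3 / 2 * b^(n+1) := by field_simp; norm_num
    have h3 : 0 < b^(n+1) := by positivity
    linarith
  obtain ⟨z0, hz0, hfin0, hφ0⟩ := hex
  set F0 : Set (Vec n) := {w | (z0.1, w + z0.2) ∈ G2} with hF0
  have mF0 : MeasurableSet F0 := by
    have : Measurable (fun w : Vec n => ((z0.1, w + z0.2) : Pt n × Vec n)) := by fun_prop
    exact this m2
  have vF0e : volume F0 = volume (Prod.mk z0.1 ⁻¹' G2) := by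
    rw [← measure_preimage_add_right volume z0.2 (Prod.mk z0.1 ⁻¹' G2)]; rfl
  have vF0 : ENNReal.ofReal (τ / (8 * a)) ≤ volume F0 := by
    rw [vF0e]; exact hz0.2
  have vF0pos : volume F0 ≠ 0 := by
    refine (lt_of_lt_of_le ?_ vF0).ne'
    rw [ENNReal.ofReal_pos]; positivity
  obtain ⟨e, s, hs, hbox, hdet⟩ := hE F0 mF0 vF0pos (by rw [vF0e]; exact hfin0.ne)
  refine ⟨z0.1.1, z0.1.2, z0.2, e, s, F0 ∩ {y | ∀ i, |⟪y, e i⟫| ≤ s i}, ?_, hs, fun w hw => hw.2, ?_, ?_, ?_⟩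
  · refine mF0.inter ?_
    have : {y : Vec n | ∀ i, |⟪y, e i⟫| ≤ s i} = ⋂ i, {y : Vec n | |⟪y, e i⟫| ≤ s i} := by ext; simp
    rw [this]
    exact MeasurableSet.iInter fun i => measurableSet_le (by fun_prop) measurable_const
  · have h1 := vF0.trans hbox
    have h2 : τ / (8 * a) = 2 ^ n * (τ / (2^(n+3) * a)) := by rw [pow_add]; field_simp; norm_num
    rw [h2, ENNReal.ofReal_mul (by positivity), ENNReal.ofReal_pow (by norm_num)] at h1
    simp only [ENNReal.ofReal_ofNat] at h1
    exact (ENNReal.mul_le_mul_iff_right (by positivity) (by finiteness)).mp h1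
  · have h1 : (∏ i, ENNReal.ofReal (s i)) * ENNReal.ofReal (τ / (8 * a)) ^ n ≤ ENNReal.ofReal (C0.toReal + 1) * ENNReal.ofReal (4 * b^(n+1) / τ) := by
      calc _ ≤ (∏ i, ENNReal.ofReal (s i)) * volume F0 ^ n := by gcongr
        _ ≤ _ := hdet
        _ ≤ _ := by
          refine mul_le_mul' ?_ hφ0
          conv_lhs => rw [← ENNReal.ofReal_toReal hC0]
          exact ENNReal.ofReal_le_ofReal (by linarith)
    rw [← ENNReal.ofReal_prod_of_nonneg (fun i _ => (hs i).le), ← ENNReal.ofReal_pow (by positivity),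
      ← ENNReal.ofReal_mul (Finset.prod_nonneg fun i _ => (hs i).le), ← ENNReal.ofReal_mul (by positivity),
      ENNReal.ofReal_le_ofReal_iff (by positivity)] at h1
    have h3 : (C0.toReal + 1) * (4 * 8 ^ n) * (a ^ n * b ^ (n + 1) / τ ^ (n + 1)) =
       ((C0.toReal + 1) * (4 * b ^ (n + 1) / τ)) / (τ / (8 * a)) ^ n := by
      rw [div_pow, mul_pow]; field_simp; ring
    rw [h3, le_div_iff₀ (by positivity)]
    exact h1
  · intro w hw
    have h1 := (hw.1 : (z0.1, w + z0.2) ∈ G2).2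
    refine h1.trans (measure_mono ?_)
    intro x hx
    simp only [Set.mem_ofPred_eq, dualI, dualM] at hx ⊢
    convert hx using 3
    rw [inner_sub_left]; ring

theorem slabInt {n : ℕ} (e : OrthonormalBasis (Fin n) ℝ (Vec n)) (x0 y0 : Vec n) (u0 : ℝ) (s : Fin n → ℝ)
    (hs : ∀ i, 0 < s i) (D : Set (Pt n)) (hD : MeasurableSet D) (V : Set (Vec n × Vec n))
    (hV : MeasurableSet V) (κ : ℝ) (j : Fin n)
    (h : ∀ p ∈ V, (∀ i, |⟪p.2, e i⟫| ≤ s i) ∧ ((p.1, u0 - 2 * ⟪p.1 - x0, p.2 + y0⟫) : Pt n) ∈ D ∧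
      κ / s j ≤ |⟪p.1 - x0, e j⟫|) :
    volume V * ENNReal.ofReal (4 * κ) ≤ ENNReal.ofReal (2 ^ n * ∏ i, s i) * volume D := by
  rw [Measure.volume_eq_prod, Measure.volume_eq_prod, Measure.prod_apply hV, Measure.prod_apply hD,
    ← lintegral_mul_const _ (measurable_measure_prodMk_left hV),
    ← lintegral_const_mul _ (measurable_measure_prodMk_left hD)]
  refine lintegral_mono fun x => ?_
  by_cases hx : κ / s j ≤ |⟪x - x0, e j⟫|
  · have h1 := slab_vec e 0 s (-(2:ℝ) • (x - x0)) j (u0 - 2 * ⟪x - x0, y0⟫) (Prod.mk x ⁻¹' D) (measurable_prodMk_left hD)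
    have hsub : Prod.mk x ⁻¹' V ⊆ {y : Vec n | (∀ i, |⟪y - 0, e i⟫| ≤ s i) ∧ u0 - 2 * ⟪x - x0, y0⟫ + ⟪-(2:ℝ) • (x - x0), y - 0⟫ ∈ Prod.mk x ⁻¹' D} := by
      intro w hw
      obtain ⟨h2, h3, -⟩ := h _ hw
      refine ⟨by simpa using h2, ?_⟩
      simp only [Set.mem_preimage, sub_zero]
      simp only at h3
      convert h3 using 2
      rw [inner_add_right, inner_smul_left]; simp; ring
    have hprod : ENNReal.ofReal (2 ^ n * ∏ i, s i) = ENNReal.ofReal (2 * s j) * ∏ i ∈ Finset.univ.erase j, ENNReal.ofReal (2 * s i) := by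
      rw [Finset.mul_prod_erase Finset.univ (fun i => ENNReal.ofReal (2 * s i)) (Finset.mem_univ j),
        ← ENNReal.ofReal_prod_of_nonneg (fun i _ => by have := hs i; positivity), Finset.prod_mul_distrib]
      simp
    rw [hprod, mul_assoc]
    calc volume (Prod.mk x ⁻¹' V) * ENNReal.ofReal (4 * κ) 
        ≤ volume (Prod.mk x ⁻¹' V) * ENNReal.ofReal (2 * s j * |⟪-(2:ℝ) • (x - x0), e j⟫|) := by
          refine mul_le_mul' le_rfl (ENNReal.ofReal_le_ofReal ?_)
          rw [inner_smul_left, abs_mul]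
          rw [div_le_iff₀ (hs j)] at hx
          simp
          linarith
      _ = ENNReal.ofReal (2 * s j) * (ENNReal.ofReal |⟪-(2:ℝ) • (x - x0), e j⟫| * volume (Prod.mk x ⁻¹' V)) := by
          rw [ENNReal.ofReal_mul (by have := hs j; positivity)]; ring
      _ ≤ _ := mul_le_mul' le_rfl ((mul_le_mul' le_rfl (measure_mono hsub)).trans h1)
  · have : Prod.mk x ⁻¹' V = ∅ := by
      ext w; simp only [Set.mem_preimage, Set.mem_empty_iff_false, iff_false]
      intro hw; exact hx (h _ hw).2.2
    simp [this]

/-- the box `B0` -/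
def B0 {n : ℕ} (e : OrthonormalBasis (Fin n) ℝ (Vec n)) (x0 y0 : Vec n) (u0 : ℝ) (s : Fin n → ℝ) (T : ℝ) : Set (Pt n) :=
  {p | (∀ j, |⟪p.1 - x0, e j⟫| ≤ T / s j) ∧ |p.2 - u0 + 2 * ⟪p.1 - x0, y0⟫| ≤ 2 * n * T}

theorem B0_meas {n : ℕ} (e : OrthonormalBasis (Fin n) ℝ (Vec n)) (x0 y0 : Vec n) (u0 : ℝ) (s : Fin n → ℝ) (T : ℝ) :
    MeasurableSet (B0 e x0 y0 u0 s T) := by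
  have : B0 e x0 y0 u0 s T = (⋂ j, {p : Pt n | |⟪p.1 - x0, e j⟫| ≤ T / s j}) ∩ {p : Pt n | |p.2 - u0 + 2 * ⟪p.1 - x0, y0⟫| ≤ 2 * n * T} := by
    ext; simp [B0]
  rw [this]
  refine MeasurableSet.inter (MeasurableSet.iInter fun i => measurableSet_le (by fun_prop) measurable_const) 
    (measurableSet_le (by fun_prop) measurable_const)

theorem inner_box {n : ℕ} (e : OrthonormalBasis (Fin n) ℝ (Vec n)) (x y : Vec n) (p q : Fin n → ℝ) (K : ℝ)
    (hx : ∀ j, |⟪x, e j⟫| ≤ p j) (hy : ∀ j, |⟪y, e j⟫| ≤ q j) (hK : ∀ j, p j * q j ≤ K) :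
    |⟪x, y⟫| ≤ n * K := by
  rw [← OrthonormalBasis.sum_inner_mul_inner e x y]
  refine (Finset.abs_sum_le_sum_abs _ _).trans ?_
  calc ∑ i, |⟪x, e i⟫ * ⟪e i, y⟫| ≤ ∑ i : Fin n, K := by
        refine Finset.sum_le_sum fun i _ => ?_
        rw [abs_mul, real_inner_comm y]
        exact (mul_le_mul (hx i) (hy i) (abs_nonneg _) ((abs_nonneg _).trans (hx i))).trans (hK i)
    _ = _ := by simp

theorem step2 {n : ℕ} (hn : 1 ≤ n) (E : Set (Pt n)) (G : Set (Pt n × Vec n)) (a b τ : ℝ)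
    (ha : 0 < a) (hb : 0 < b) (hτ : 0 < τ) (hG : MeasurableSet G)
    (vE : volume E = ENNReal.ofReal a) 
    (hGE : ∀ z ∈ G, z.1 ∈ E) 
    (x0 : Vec n) (u0 : ℝ) (y0 : Vec n) (e : OrthonormalBasis (Fin n) ℝ (Vec n)) (s : Fin n → ℝ)
    (F : Set (Vec n)) (mF : MeasurableSet F) (hs : ∀ i, 0 < s i) (hF : ∀ w ∈ F, ∀ i, |⟪w, e i⟫| ≤ s i)
    (vF : ENNReal.ofReal (τ / (2^(n+3) * a)) ≤ volume F)
    (hW : ∀ w ∈ F, ENNReal.ofReal (τ / (4 * b)) ≤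
        volume {x : Vec n | (((x, u0 - 2 * ⟪x - x0, w + y0⟫), w + y0) : Pt n × Vec n) ∈ Gp G (τ / (4 * a))})
    (ω T δ : ℝ) (hω : ω = τ ^ 2 / (2 ^ (n+5) * (a * b))) (hT : T = n * 2 ^ n * (∏ i, s i) * a / ω)
    (hδ : δ = ω / (4 ^ (n+1) * T ^ n)) :
    ENNReal.ofReal (δ / 2 * τ) ≤ volume {z | z ∈ G ∧ z.1 ∈ B0 e x0 y0 u0 s T} := by
  have hPi : 0 < ∏ i, s i := Finset.prod_pos fun i _ => hs i
  have hn0 : (0 : ℝ) < n := by exact_mod_cast hn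
  have hω0 : 0 < ω := by rw [hω]; positivity
  have hT0 : 0 < T := by rw [hT]; positivity
  have hδ0 : 0 < δ := by rw [hδ]; positivity
  set E1 : Set (Pt n) := {p | ENNReal.ofReal (τ / (4 * a)) ≤ volume (Prod.mk p ⁻¹' G)} with hE1
  have mE1 : MeasurableSet E1 := measurableSet_le measurable_const (measurable_measure_prodMk_left hG)
  have vE1 : volume E1 ≤ ENNReal.ofReal a := by
    rw [← vE]
    refine measure_mono fun p hp => ?_
    by_contra hcon
    have : Prod.mk p ⁻¹' G = ∅ := by
      ext w; simp only [Set.mem_preimage, Set.mem_empty_iff_false, iff_false]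
      intro hw; exact hcon (hGE _ hw)
    have hp' : ENNReal.ofReal (τ / (4 * a)) ≤ volume (Prod.mk p ⁻¹' G) := hp
    rw [this] at hp'
    simp at hp'
    have : 0 < τ / (4 * a) := by positivity
    linarith
  set ψ : Vec n × Vec n → Pt n := fun p => (p.1, u0 - 2 * ⟪p.1 - x0, p.2 + y0⟫) with hψ
  have mψ : Measurable ψ := by fun_prop
  set W : Set (Vec n × Vec n) := {p | p.2 ∈ F ∧ (ψ p, p.2 + y0) ∈ Gp G (τ / (4 * a))} with hWdef
  have mGp : MeasurableSet (Gp G (τ / (4 * a))) := hG.inter (measurable_fst mE1)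
  have mW : MeasurableSet W := by
    refine (measurable_snd mF).inter ?_
    have : Measurable (fun p : Vec n × Vec n => ((ψ p, p.2 + y0) : Pt n × Vec n)) := by fun_prop
    exact this mGp
  have vW : ENNReal.ofReal ω ≤ volume W := by
    rw [Measure.volume_eq_prod, Measure.prod_apply_symm mW]
    calc ENNReal.ofReal ω = ENNReal.ofReal (τ / (4 * b)) * ENNReal.ofReal (τ / (2^(n+3) * a)) := by
          rw [← ENNReal.ofReal_mul (by positivity), hω]; congr 1
          rw [pow_add, pow_add]; field_simp; norm_num
      _ ≤ ENNReal.ofReal (τ / (4 * b)) * volume F := mul_le_mul' le_rfl vF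
      _ = ∫⁻ w in F, ENNReal.ofReal (τ / (4 * b)) := by rw [setLIntegral_const]
      _ ≤ ∫⁻ w in F, volume ((fun x => (x, w)) ⁻¹' W) := by
          refine setLIntegral_mono' mF fun w hw => (hW w hw).trans (measure_mono ?_)
          intro x hx
          exact ⟨hw, hx⟩
      _ ≤ _ := setLIntegral_le_lintegral _ _
  have hWb : ∀ p ∈ W, (∀ i, |⟪p.2, e i⟫| ≤ s i) ∧ ψ p ∈ E1 := fun p hp => ⟨hF _ hp.1, hp.2.2⟩
  -- the large part
  set Vl : Fin n → Set (Vec n × Vec n) := fun j => W ∩ {p | T / s j < |⟪p.1 - x0, e j⟫|} with hVl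
  have vVl : ∀ j, volume (Vl j) ≤ ENNReal.ofReal (ω / (4 * n)) := by
    intro j
    have h1 := slabInt e x0 y0 u0 s hs E1 mE1 (Vl j) (mW.inter (measurableSet_lt measurable_const (by fun_prop))) T j
      (fun p hp => ⟨(hWb p hp.1).1, (hWb p hp.1).2, hp.2.le⟩)
    have h2 := h1.trans (mul_le_mul' le_rfl vE1)
    rw [← ENNReal.ofReal_mul (by positivity)] at h2
    have h3 : 2 ^ n * (∏ i, s i) * a = ω / (4 * n) * (4 * T) := by
      rw [hT]; field_simp
    rw [h3, ENNReal.ofReal_mul (p := ω / (4 * n)) (by positivity)] at h2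
    exact (ENNReal.mul_le_mul_iff_left (by simpa using hT0) (by finiteness)).mp h2
  have j0 : Fin n := ⟨0, hn⟩
  set R : Fin n → ℝ := fun i => (if i = j0 then δ else 1) * (T / s i) with hR
  set Vs : Set (Vec n × Vec n) := {x | ∀ i, |⟪x - x0, e i⟫| ≤ R i} ×ˢ {y | ∀ i, |⟪y - 0, e i⟫| ≤ s i} with hVs
  have hsR : (∏ i, (2 * R i)) * ∏ i, (2 * s i) = ω / 4 := by
    have h1 : (∏ i, (2 * R i)) * ∏ i, (2 * s i) = 4 ^ n * (δ * T ^ n) := by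
      rw [← Finset.prod_mul_distrib]
      have : ∀ i, 2 * R i * (2 * s i) = (4 * T) * (if i = j0 then δ else 1) := by
        intro i; have := (hs i).ne'; simp only [hR]; field_simp; ring
      simp only [this]
      rw [Finset.prod_mul_distrib]
      simp; ring
    rw [h1, hδ, pow_succ]; field_simp
  have hRpos : ∀ i, 0 < R i := by
    intro i; have := hs i; simp only [hR]; split_ifs <;> positivity
  have vVs : volume Vs ≤ ENNReal.ofReal (ω / 4) := by
    rw [hVs, Measure.volume_eq_prod, Measure.prod_prod, box_vec, box_vec, ← hsR,
      ENNReal.ofReal_mul (Finset.prod_nonneg fun i _ => by have := hRpos i; positivity),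
      ENNReal.ofReal_prod_of_nonneg (fun i _ => by have := hRpos i; positivity),
      ENNReal.ofReal_prod_of_nonneg (fun i _ => by have := hs i; positivity)]
  set Vm : Set (Vec n × Vec n) := W ∩ ({p | ∀ i, |⟪p.1 - x0, e i⟫| ≤ T / s i} ∩ {p | δ * T / s j0 ≤ |⟪p.1 - x0, e j0⟫|}) with hVm
  have mVm : MeasurableSet Vm := by
    refine mW.inter (MeasurableSet.inter ?_ (measurableSet_le measurable_const (by fun_prop)))
    have : {p : Vec n × Vec n | ∀ i, |⟪p.1 - x0, e i⟫| ≤ T / s i} = ⋂ i, {p : Vec n × Vec n | |⟪p.1 - x0, e i⟫| ≤ T / s i} := by ext; simp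
    rw [this]
    exact MeasurableSet.iInter fun i => measurableSet_le (by fun_prop) measurable_const
  have hcov : W ⊆ Vm ∪ (Vs ∪ ⋃ j, Vl j) := by
    intro p hp
    by_cases h1 : ∀ i, |⟪p.1 - x0, e i⟫| ≤ T / s i
    · by_cases h2 : δ * T / s j0 ≤ |⟪p.1 - x0, e j0⟫|
      · exact Or.inl ⟨hp, h1, h2⟩
      · right; left
        refine ⟨?_, by simpa using (hWb p hp).1⟩
        intro i
        simp only [hR]
        split_ifs with hi
        · subst hi; rw [← mul_div_assoc]; exact (not_le.mp h2).le
        · rw [one_mul]; exact h1 i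
    · push Not at h1
      obtain ⟨j, hj⟩ := h1
      right; right
      exact Set.mem_iUnion.mpr ⟨j, hp, hj⟩
  have vVm : ENNReal.ofReal (ω / 2) ≤ volume Vm := by
    have h1 : ENNReal.ofReal ω ≤ volume Vm + ENNReal.ofReal (ω / 2) := by
      calc ENNReal.ofReal ω ≤ volume W := vW
        _ ≤ volume Vm + (volume Vs + ∑ j, volume (Vl j)) := by
            refine (measure_mono hcov).trans ((measure_union_le _ _).trans (add_le_add le_rfl ?_))
            refine (measure_union_le _ _).trans (add_le_add le_rfl ?_)
            exact measure_iUnion_fintype_le _ _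
        _ ≤ volume Vm + (ENNReal.ofReal (ω / 4) + ∑ j : Fin n, ENNReal.ofReal (ω / (4 * n))) := by
            refine add_le_add le_rfl (add_le_add vVs (Finset.sum_le_sum fun j _ => vVl j))
        _ = volume Vm + ENNReal.ofReal (ω / 2) := by
            congr 1
            rw [← ENNReal.ofReal_sum_of_nonneg (fun i _ => by positivity), ← ENNReal.ofReal_add (by positivity) (by positivity)]
            congr 1
            simp; field_simp; norm_num
    exact ofReal_sub_half (by positivity) (by positivity) h1 (by ring)
  have mB := B0_meas e x0 y0 u0 s T
  have h5 := slabInt e x0 y0 u0 s hs (E1 ∩ B0 e x0 y0 u0 s T) (mE1.inter mB) Vm mVm (δ * T) j0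
    (by
      intro p hp
      refine ⟨(hWb p hp.1).1, ⟨(hWb p hp.1).2, hp.2.1, ?_⟩, hp.2.2⟩
      have h6 := inner_box e (p.1 - x0) p.2 (fun j => T / s j) s T hp.2.1 (hWb p hp.1).1
        (fun j => by have := (hs j).ne'; field_simp; exact le_rfl)
      have h7 : u0 - 2 * ⟪p.1 - x0, p.2 + y0⟫ - u0 + 2 * ⟪p.1 - x0, y0⟫ = -2 * ⟪p.1 - x0, p.2⟫ := by
        rw [inner_add_right]; ring
      simp only
      rw [h7, abs_mul]; simp; linarith)
  have h8 : ENNReal.ofReal (2 * n * δ * a) ≤ volume (E1 ∩ B0 e x0 y0 u0 s T) := by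
    have h9 := (mul_le_mul' vVm (le_refl (ENNReal.ofReal (4 * (δ * T))))).trans h5
    rw [← ENNReal.ofReal_mul (by positivity)] at h9
    have : ω / 2 * (4 * (δ * T)) = (2 ^ n * ∏ i, s i) * (2 * n * δ * a) := by
      rw [hT]; field_simp; norm_num
    rw [this, ENNReal.ofReal_mul (by positivity)] at h9
    exact (ENNReal.mul_le_mul_iff_right (by simpa using hPi) (by finiteness)).mp h9
  have mG3 : MeasurableSet {z | z ∈ G ∧ z.1 ∈ B0 e x0 y0 u0 s T} := hG.inter (measurable_fst mB)
  rw [Measure.volume_eq_prod, Measure.prod_apply mG3]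
  calc ENNReal.ofReal (δ / 2 * τ) ≤ ENNReal.ofReal (τ / (4 * a)) * ENNReal.ofReal (2 * n * δ * a) := by
        rw [← ENNReal.ofReal_mul (by positivity)]
        refine ENNReal.ofReal_le_ofReal ?_
        have : τ / (4 * a) * (2 * n * δ * a) = n * (δ / 2 * τ) := by field_simp; norm_num
        rw [this]
        have hn1 : (1:ℝ) ≤ n := by exact_mod_cast hn
        exact le_mul_of_one_le_left (by positivity) hn1
    _ ≤ ENNReal.ofReal (τ / (4 * a)) * volume (E1 ∩ B0 e x0 y0 u0 s T) := mul_le_mul' le_rfl h8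
    _ = ∫⁻ p in E1 ∩ B0 e x0 y0 u0 s T, ENNReal.ofReal (τ / (4 * a)) := by rw [setLIntegral_const]
    _ ≤ ∫⁻ p in E1 ∩ B0 e x0 y0 u0 s T, volume (Prod.mk p ⁻¹' {z | z ∈ G ∧ z.1 ∈ B0 e x0 y0 u0 s T}) := by
        refine setLIntegral_mono' (mE1.inter mB) fun p hp => ?_
        refine (hp.1 : ENNReal.ofReal (τ / (4 * a)) ≤ volume (Prod.mk p ⁻¹' G)).trans (measure_mono ?_)
        intro y hy
        exact ⟨hy, hp.2⟩
    _ ≤ _ := setLIntegral_le_lintegral _ _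

theorem step3 {n : ℕ} (Es : Set (Pt n)) (G : Set (Pt n × Vec n)) (b τ : ℝ)
    (hb : 0 < b) (hτ : 0 < τ) (hG : MeasurableSet G)
    (vEs : volume Es = ENNReal.ofReal b) (hGEs : ∀ z ∈ G, (dualM z).1 ∈ Es)
    (x0 : Vec n) (u0 : ℝ) (y0 : Vec n) (e : OrthonormalBasis (Fin n) ℝ (Vec n)) (s : Fin n → ℝ)
    (hs : ∀ i, 0 < s i) (T η : ℝ) (hT : 0 < T) (hη : 0 < η)
    (hv : ENNReal.ofReal (η * τ) ≤ volume {z | z ∈ G ∧ z.1 ∈ B0 e x0 y0 u0 s T}) :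
    ∃ G4 ⊆ {z | z ∈ G ∧ z.1 ∈ B0 e x0 y0 u0 s T}, ENNReal.ofReal (η * τ / 2) ≤ volume G4 ∧
      ∀ z ∈ G4, ∀ j, |⟪z.2 - y0, e j⟫| ≤ (n * 2 ^ (n+1) * b * T ^ n / (η * τ * ∏ i, s i)) * s j := by
  have hPi : 0 < ∏ i, s i := Finset.prod_pos fun i _ => hs i
  set G3 := {z | z ∈ G ∧ z.1 ∈ B0 e x0 y0 u0 s T} with hG3
  have mG3 : MeasurableSet G3 := hG.inter (measurable_fst (B0_meas e x0 y0 u0 s T))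
  obtain ⟨m4, v4⟩ := refine_dual G3 mG3 Es (fun z hz => hGEs z hz.1) (ENNReal.ofReal (η * τ / (2 * b)))
  refine ⟨{z | z ∈ G3 ∧ ENNReal.ofReal (η * τ / (2 * b)) ≤ volume {x : Vec n | dualI ((dualM z).1, x) ∈ G3}}, fun z hz => hz.1, ?_, ?_⟩
  · have := hv.trans v4
    rw [vEs, ← ENNReal.ofReal_mul (by positivity)] at this
    exact ofReal_sub_half (by positivity) (by positivity) this (by field_simp; norm_num)
  · intro z hz j
    set R : Fin n → ℝ := fun i => T / s i with hR
    have hR0 : ∀ i, 0 < R i := fun i => div_pos hT (hs i)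
    have h1 := slab_vec e x0 R (-(2:ℝ) • (z.2 - y0)) j (z.1.2 + 2 * ⟪z.1.1, z.2⟫ - u0 - 2 * ⟪x0, z.2⟫)
      (Set.Icc (-(2 * n * T)) (2 * n * T)) measurableSet_Icc
    have h2 : ENNReal.ofReal (η * τ / (2 * b)) ≤ volume {y : Vec n | (∀ i, |⟪y - x0, e i⟫| ≤ R i) ∧
        z.1.2 + 2 * ⟪z.1.1, z.2⟫ - u0 - 2 * ⟪x0, z.2⟫ + ⟪-(2:ℝ) • (z.2 - y0), y - x0⟫ ∈ Set.Icc (-(2 * n * T)) (2 * n * T)} := by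
      refine hz.2.trans (measure_mono ?_)
      intro x hx
      refine ⟨hx.2.1, ?_⟩
      have h3 := hx.2.2
      rw [abs_le] at h3
      have h4 : z.1.2 + 2 * ⟪z.1.1, z.2⟫ - u0 - 2 * ⟪x0, z.2⟫ + ⟪-(2:ℝ) • (z.2 - y0), x - x0⟫ =
        (dualI ((dualM z).1, x)).1.2 - u0 + 2 * ⟪(dualI ((dualM z).1, x)).1.1 - x0, y0⟫ := by
        simp only [dualI, dualM]
        rw [inner_smul_left, real_inner_comm (x - x0)]
        simp only [inner_sub_left, inner_sub_right]
        simp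
        ring
      rw [h4]
      exact h3
    have hnT : 0 ≤ 2 * n * T - -(2 * n * T) := by
      have : 0 ≤ 2 * n * T := by positivity
      linarith
    have h5 := (mul_le_mul' le_rfl h2).trans h1
    have h6 := mul_le_mul' (le_refl (ENNReal.ofReal (2 * R j))) h5
    rw [← mul_assoc (ENNReal.ofReal (2 * R j)) (∏ i ∈ _, _), Finset.mul_prod_erase Finset.univ (fun i => ENNReal.ofReal (2 * R i)) (Finset.mem_univ j),
        ← ENNReal.ofReal_prod_of_nonneg (fun i _ => by have := hR0 i; positivity), Real.volume_Icc,
        ← ENNReal.ofReal_mul (by positivity), ← ENNReal.ofReal_mul (by have := hR0 j; positivity), ← ENNReal.ofReal_mul (Finset.prod_nonneg fun i _ => by have := hR0 i; positivity),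
        ENNReal.ofReal_le_ofReal_iff (mul_nonneg (Finset.prod_nonneg fun i _ => by have := hR0 i; positivity) hnT)] at h6
    have h7 : ∏ i, 2 * R i = 2 ^ n * T ^ n / ∏ i, s i := by
      rw [Finset.prod_mul_distrib]; simp only [hR]; rw [Finset.prod_div_distrib]; simp; ring
    rw [h7, inner_smul_left, abs_mul] at h6
    simp only [hR] at h6
    simp at h6
    have hsj := hs j
    set Q := |⟪z.2 - y0, e j⟫|
    have h8 : Q * (2 * T * η * τ / (s j * b)) ≤ 2 ^ n * T ^ n / (∏ i, s i) * (4 * n * T) := by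
      refine le_trans (le_of_eq ?_) (h6.trans (le_of_eq ?_))
      · field_simp
      · ring
    rw [← le_div_iff₀ (by positivity)] at h8
    refine h8.trans (le_of_eq ?_)
    rw [pow_succ]; field_simp; ring

theorem pigeon {Ω ι : Type*} [MeasurableSpace Ω] [Fintype ι] (μ : Measure Ω) (A : Set Ω) (hA : μ A ≠ 0)
    (f : ι → Ω → ℝ) (M σ : ℝ) (hσ : 0 < σ) (hM : σ ≤ M) (hf : ∀ i, ∀ z ∈ A, |f i z| ≤ M) :
    ∃ zb ∈ A, μ A ≤ ENNReal.ofReal ((5 * M / σ) ^ Fintype.card ι) * μ (A ∩ {z | ∀ i, |f i z - f i zb| < σ}) := by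
  classical
  set K : ℤ := ⌈M / σ⌉ with hK
  set cells : Finset (ι → ℤ) := Fintype.piFinset fun _ => Finset.Icc (-K) K with hcells
  set cell : (ι → ℤ) → Set Ω := fun k => A ∩ {z | ∀ i, ⌊f i z / σ⌋ = k i} with hcell
  have hcard : (cells.card : ℝ) ≤ (5 * M / σ) ^ Fintype.card ι := by
    rw [hcells, Fintype.card_piFinset]
    simp only [Int.card_Icc, Finset.prod_const, Finset.card_univ]
    push_cast
    refine pow_le_pow_left₀ (by positivity) ?_ _
    have h1 : (1:ℝ) ≤ M / σ := by rw [le_div_iff₀ hσ]; linarith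
    have h2 : (K : ℝ) < M / σ + 1 := Int.ceil_lt_add_one _
    have h3 : (0 : ℝ) ≤ K := by
      have := Int.le_ceil (M / σ); linarith
    have h4 : (((K + 1 - -K).toNat : ℤ) : ℝ) = 2 * K + 1 := by
      rw [Int.toNat_of_nonneg (by have : (0:ℤ) ≤ K := by exact_mod_cast h3
                                  linarith)]
      push_cast; ring
    have h5 : (((K + 1 - -K).toNat : ℕ) : ℝ) = 2 * K + 1 := by
      rw [← h4]; norm_cast
    rw [h5, mul_div_assoc]; linarith
  have hcov : A ⊆ ⋃ k ∈ cells, cell k := by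
    intro z hz
    simp only [Set.mem_iUnion]
    refine ⟨fun i => ⌊f i z / σ⌋, ?_, hz, fun i => rfl⟩
    rw [hcells, Fintype.mem_piFinset]
    intro i
    have := abs_le.mp (hf i z hz)
    have h1 : f i z / σ ≤ M / σ := by gcongr; exact this.2
    have h2 : -(M / σ) ≤ f i z / σ := by rw [← neg_div]; gcongr; exact this.1
    have h3 := Int.le_ceil (M / σ)
    rw [Finset.mem_Icc]
    constructor
    · rw [Int.le_floor]; push_cast; linarith
    · have : ⌊f i z / σ⌋ ≤ ⌊M / σ⌋ := Int.floor_mono h1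
      exact this.trans (Int.floor_le_ceil _)
  by_contra! hcon
  have hM0 : 0 < M := hσ.trans_le hM
  have hN : (0:ℝ) < (5 * M / σ) ^ Fintype.card ι := by positivity
  -- each cell is small
  have hsmall : ∀ k, ENNReal.ofReal ((5 * M / σ) ^ Fintype.card ι) * μ (cell k) < μ A := by
    intro k
    by_cases hne : (cell k).Nonempty
    · obtain ⟨zb, hzb⟩ := hne
      refine lt_of_le_of_lt (mul_le_mul' le_rfl (measure_mono ?_)) (hcon zb hzb.1)
      intro z hz
      refine ⟨hz.1, fun i => ?_⟩
      have h1 := Int.abs_sub_lt_one_of_floor_eq_floor ((hz.2 i).trans (hzb.2 i).symm)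
      rw [← sub_div, abs_div, abs_of_pos hσ, div_lt_one hσ] at h1
      exact h1
    · rw [Set.not_nonempty_iff_eq_empty] at hne
      simp [hne, pos_iff_ne_zero.mpr hA]
  have hfin : μ A ≠ ⊤ → False := by
    intro hAf
    have hne : cells.Nonempty := by
      by_contra h; rw [Finset.not_nonempty_iff_eq_empty] at h
      rw [h] at hcov; simp at hcov
      rw [hcov] at hA; simp at hA
    have h1 : ENNReal.ofReal ((5 * M / σ) ^ Fintype.card ι) * μ A < cells.card * μ A := by
      calc _ ≤ ENNReal.ofReal ((5 * M / σ) ^ Fintype.card ι) * ∑ k ∈ cells, μ (cell k) :=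
            mul_le_mul' le_rfl ((measure_mono hcov).trans (measure_biUnion_finset_le _ _))
        _ = ∑ k ∈ cells, ENNReal.ofReal ((5 * M / σ) ^ Fintype.card ι) * μ (cell k) := by rw [Finset.mul_sum]
        _ < ∑ k ∈ cells, μ A := ENNReal.sum_lt_sum_of_nonempty hne fun k _ => hsmall k
        _ = _ := by simp
    have h2 : (cells.card : ℝ≥0∞) ≤ ENNReal.ofReal ((5 * M / σ) ^ Fintype.card ι) := by
      rw [← ENNReal.ofReal_natCast]; exact ENNReal.ofReal_le_ofReal hcard
    exact absurd h1 (not_lt.mpr (mul_le_mul' h2 le_rfl))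
  by_cases hAf : μ A = ⊤
  · -- infinite measure
    have hne : cells.Nonempty := by
      by_contra h; rw [Finset.not_nonempty_iff_eq_empty] at h
      rw [h] at hcov; simp at hcov
      rw [hcov] at hA; simp at hA
    have h3 : ∑ k ∈ cells, μ (cell k) < ⊤ := by
      refine ENNReal.sum_lt_top.mpr fun k _ => ?_
      by_contra h
      have := hsmall k
      rw [not_lt_top_iff.mp h, ENNReal.mul_top (by simpa using hN)] at this
      exact not_top_lt this
    have := (measure_mono (μ := μ) hcov).trans (measure_biUnion_finset_le cells cell)
    rw [hAf] at this
    exact absurd h3 (not_lt.mpr this)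
  · exact hfin hAf

/-- the ball in bilinear coordinates -/
def bil {n : ℕ} (zb : Pt n × Vec n) (e : OrthonormalBasis (Fin n) ℝ (Vec n)) (r rs : Fin n → ℝ) (ρ : ℝ) :
    Set (Pt n × Vec n) :=
  {z | (∀ j, |⟪z.1.1 - zb.1.1, e j⟫| < r j) ∧ (∀ j, |⟪z.2 - zb.2, e j⟫| < rs j) ∧
    |z.1.2 - zb.1.2 + 2 * ⟪z.1.1 - zb.1.1, zb.2⟫| < ρ ∧ |z.1.2 - zb.1.2 + 2 * ⟪z.1.1 - zb.1.1, z.2⟫| < ρ}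

theorem step4 {n : ℕ} (x0 : Vec n) (u0 : ℝ) (y0 : Vec n) (e : OrthonormalBasis (Fin n) ℝ (Vec n)) (s : Fin n → ℝ)
    (hs : ∀ i, 0 < s i) (T H K l : ℝ) (hT : 0 < T) (hH : 0 < H) (hK : K = (1 + 2 * n) * (1 + H)) (hl : 0 < l) (hl1 : l ≤ 1)
    (G : Set (Pt n × Vec n)) (hG0 : volume G ≠ 0) (hB : ∀ z ∈ G, z.1 ∈ B0 e x0 y0 u0 s T)
    (hY : ∀ z ∈ G, ∀ j, |⟪z.2 - y0, e j⟫| ≤ H * s j) :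
    ∃ zb ∈ G, volume G ≤ ENNReal.ofReal ((5 * K ^ 2 / l ^ 2) ^ (2 * n + 1)) *
      volume (G ∩ bil zb e (fun j => l * (T / s j)) (fun j => l * s j) (l ^ 2 * T)) := by
  have hn0 : (0:ℝ) ≤ n := Nat.cast_nonneg n
  have hK1 : 1 ≤ K := by rw [hK]; nlinarith
  have hKH : 1 + 2 * n * H ≤ K := by rw [hK]; nlinarith
  have hKn : 2 * n ≤ K := by rw [hK]; nlinarith
  have hKH' : H ≤ K := by rw [hK]; nlinarith
  have hl2 : l ^ 2 ≤ l := by nlinarith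
  set σ := l ^ 2 / K with hσ
  have hσ0 : 0 < σ := by positivity
  have hσl : σ ≤ l := by rw [hσ, div_le_iff₀ (by positivity)]; nlinarith
  set f : (Fin n ⊕ Fin n) ⊕ Unit → Pt n × Vec n → ℝ := fun i z => match i with
    | .inl (.inl j) => ⟪z.1.1 - x0, e j⟫ * (s j / T)
    | .inl (.inr j) => ⟪z.2 - y0, e j⟫ / s j
    | .inr _ => (z.1.2 - u0 + 2 * ⟪z.1.1 - x0, y0⟫) / T with hf
  obtain ⟨zb, hzb, hv⟩ := pigeon volume G hG0 f K σ hσ0 (hσl.trans (hl1.trans hK1)) (by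
    intro i z hz
    have hsT : ∀ j, 0 < s j / T := fun j => div_pos (hs j) hT
    rcases i with (j | j) | j
    · simp only [hf]
      rw [abs_mul, abs_of_pos (hsT j)]
      have h1 := (hB z hz).1 j
      have h2 : T / s j * (s j / T) = 1 := by have := (hs j).ne'; field_simp
      calc _ ≤ T / s j * (s j / T) := by gcongr; exact (hsT j).le
        _ ≤ K := by rw [h2]; exact hK1
    · simp only [hf]
      rw [abs_div, abs_of_pos (hs j), div_le_iff₀ (hs j)]
      exact (hY z hz j).trans (by have := hs j; gcongr)
    · simp only [hf]
      rw [abs_div, abs_of_pos hT, div_le_iff₀ hT]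
      exact (hB z hz).2.trans (by gcongr))
  refine ⟨zb, hzb, ?_⟩
  have hcard : Fintype.card ((Fin n ⊕ Fin n) ⊕ Unit) = 2 * n + 1 := by simp; ring
  rw [hcard] at hv
  have h5 : 5 * K / σ = 5 * K ^ 2 / l ^ 2 := by rw [hσ]; field_simp
  rw [h5] at hv
  refine hv.trans (mul_le_mul' le_rfl (measure_mono ?_))
  rintro z ⟨hz, hzf⟩
  refine ⟨hz, ?_⟩
  have hX : ∀ j, |⟪z.1.1 - zb.1.1, e j⟫| < σ * (T / s j) := by
    intro j
    have h1 := hzf (.inl (.inl j))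
    simp only [hf] at h1
    have hsj := hs j
    rw [← sub_mul, ← inner_sub_left, abs_mul, abs_of_pos (div_pos hsj hT), sub_sub_sub_cancel_right] at h1
    rw [← lt_div_iff₀ (by positivity)] at h1
    refine h1.trans_le (le_of_eq ?_)
    field_simp
  have hY' : ∀ j, |⟪z.2 - zb.2, e j⟫| < σ * s j := by
    intro j
    have h1 := hzf (.inl (.inr j))
    simp only [hf] at h1
    rw [← sub_div, ← inner_sub_left, abs_div, abs_of_pos (hs j), sub_sub_sub_cancel_right, div_lt_iff₀ (hs j)] at h1
    exact h1
  have hU : |(z.1.2 - u0 + 2 * ⟪z.1.1 - x0, y0⟫) - (zb.1.2 - u0 + 2 * ⟪zb.1.1 - x0, y0⟫)| < σ * T := by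
    have h1 := hzf (.inr ())
    simp only [hf] at h1
    rw [← sub_div, abs_div, abs_of_pos hT, div_lt_iff₀ hT] at h1
    exact h1
  have hmain : ∀ y : Vec n, (∀ j, |⟪y - y0, e j⟫| ≤ H * s j) → |z.1.2 - zb.1.2 + 2 * ⟪z.1.1 - zb.1.1, y⟫| < l ^ 2 * T := by
    intro y hy
    have h1 := inner_box e (z.1.1 - zb.1.1) (y - y0) (fun j => σ * (T / s j)) (fun j => H * s j) (σ * H * T) (fun j => (hX j).le) hy
      (fun j => by have := (hs j).ne'; apply le_of_eq; field_simp)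
    have h2 : z.1.2 - zb.1.2 + 2 * ⟪z.1.1 - zb.1.1, y⟫ =
      ((z.1.2 - u0 + 2 * ⟪z.1.1 - x0, y0⟫) - (zb.1.2 - u0 + 2 * ⟪zb.1.1 - x0, y0⟫)) + 2 * ⟪z.1.1 - zb.1.1, y - y0⟫ := by
      simp only [inner_sub_left, inner_sub_right]; ring
    rw [h2]
    calc _ ≤ |(z.1.2 - u0 + 2 * ⟪z.1.1 - x0, y0⟫) - (zb.1.2 - u0 + 2 * ⟪zb.1.1 - x0, y0⟫)| + |2 * ⟪z.1.1 - zb.1.1, y - y0⟫| := abs_add_le _ _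
      _ < σ * T + 2 * (n * (σ * H * T)) := by
        refine add_lt_add_of_lt_of_le hU ?_
        rw [abs_mul]; simp; linarith
      _ = (1 + 2 * n * H) * (σ * T) := by ring
      _ ≤ K * (σ * T) := by gcongr
      _ = l ^ 2 * T := by rw [hσ]; field_simp
  refine ⟨fun j => (hX j).trans_le ?_, fun j => (hY' j).trans_le ?_, hmain _ (hY zb hzb), hmain _ (hY z hz)⟩
  · have := hs j; exact mul_le_mul_of_nonneg_right hσl (by positivity)
  · have := hs j; exact mul_le_mul_of_nonneg_right hσl (by positivity)

theorem arithM (n : ℕ) (hn : 1 ≤ n) (C1 : ℝ) (hC1 : 0 < C1) : ∃ C : ℝ, 0 < C ∧ ∃ A : ℕ,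
    ∀ ε a b τ P ω T δ H K : ℝ, 0 < ε → ε ≤ 1 → 0 < a → 0 < b → 0 < τ → 0 < P →
      ε * (a * b) ^ (n+1) ≤ τ ^ (n+2) →
      τ / (2^(n+3) * a) ≤ 2 ^ n * P → P ≤ C1 * (a^n * b^(n+1) / τ^(n+1)) →
      ω = τ ^ 2 / (2 ^ (n+5) * (a * b)) → T = n * 2 ^ n * P * a / ω →
      δ = ω / (4 ^ (n+1) * T ^ n) → H = n * 2 ^ (n+1) * b * T ^ n / (δ / 2 * τ * P) →
      K = (1 + 2 * n) * (1 + H) →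
      C⁻¹ * ε ^ A * τ * (5 * K ^ 2 / ε ^ 2) ^ (2 * n + 1) ≤ δ / 2 * τ / 2 ∧
      ε ^ (n+2) * (T ^ (n+1) / P) ≤ C * a ∧ ε ^ (n+2) * (P * T) ≤ C * b := by
  have hn0 : (0:ℝ) < n := by exact_mod_cast hn
  set k1 : ℝ := n * 2 ^ (2*n+5) with hk1
  have hk1p : 0 < k1 := by positivity
  set k2 : ℝ := 2 ^ (n+5) * 4 ^ (n+1) * k1 ^ n with hk2
  have hk2p : 0 < k2 := by positivity
  set k4 : ℝ := n * 2 ^ (n+2) * k1 ^ n * k2 with hk4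
  have hk4p : 0 < k4 := by positivity
  set k5 : ℝ := k4 * 2 ^ (2*n+3) with hk5
  have hk5p : 0 < k5 := by positivity
  set k6 : ℝ := (1 + 2 * n) * (1 + k5 * (C1 ^ n) ^ 2) with hk6
  have hk6p : 0 < k6 := by positivity
  set D1 : ℝ := 4 * k2 * C1 ^ n * (5 * k6 ^ 2) ^ (2 * n + 1) with hD1
  have hD1p : 0 < D1 := by positivity
  set C : ℝ := D1 + k1 ^ (n+1) * C1 ^ n + k1 * C1 ^ 2 with hC
  have hCp : 0 < C := by positivity
  refine ⟨C, hCp, (n+1) + (4 * n + 6) * (2 * n + 1), ?_⟩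
  intro ε a b τ P ω T δ H K hε hε1 ha hb hτ hP hεq hPl hPu hω hT hδ hH hK
  set π := P * a / τ with hπ
  have hπ0 : 0 < π := by positivity
  set q := (a * b) ^ (n+1) / τ ^ (n+2) with hq
  have hq0 : 0 < q := by positivity
  have hqε : q * ε ≤ 1 := by
    rw [hq, div_mul_eq_mul_div, div_le_one (by positivity)]; linarith
  have hπl : 1 ≤ 2 ^ (2*n+3) * π := by
    rw [div_le_iff₀ (by positivity)] at hPl
    rw [hπ, ← mul_div_assoc, le_div_iff₀ hτ, one_mul]
    refine hPl.trans (le_of_eq ?_)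
    rw [show 2*n+3 = n + (n+3) by ring, pow_add]; ring
  have hπu : π * ε ≤ C1 := by
    have h1 : π ≤ C1 * q := by
      rw [hπ, hq, div_le_iff₀ hτ]
      calc P * a ≤ C1 * (a^n * b^(n+1) / τ^(n+1)) * a := by gcongr
        _ = _ := by rw [mul_pow]; field_simp; ring
    calc π * ε ≤ C1 * q * ε := by gcongr
      _ = C1 * (q * ε) := by ring
      _ ≤ C1 * 1 := by gcongr
      _ = C1 := by ring
  have hP' : P = π * τ / a := by rw [hπ]; field_simp
  have hT' : T = k1 * π * (a * b) / τ := by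
    rw [hT, hω, hk1, hπ, show 2*n+5 = n + (n+5) by ring, pow_add 2 n (n+5)]; field_simp
  have hTn : T ^ n = k1 ^ n * (π ^ n * q) * τ ^ 2 / (a * b) := by
    rw [hT', hq, div_pow, mul_pow, mul_pow]
    field_simp; ring
  set Q := π ^ n * q with hQ
  have hQ0 : 0 < Q := by positivity
  have hQu : Q * ε ^ (n+1) ≤ C1 ^ n := by
    calc Q * ε ^ (n+1) = (π * ε) ^ n * (q * ε) := by rw [hQ]; ring
      _ ≤ C1 ^ n * 1 := by gcongr
      _ = C1 ^ n := by ring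
  have hδ' : δ = 1 / (k2 * Q) := by
    rw [hδ, hTn, hω, hk2]; field_simp
  have hδ0 : 0 < δ := by rw [hδ']; positivity
  have hH' : H = k4 * Q ^ 2 / π := by
    rw [hH, hTn, hδ', hk4, hP', pow_succ 2 (n+1)]; field_simp
  have hH0 : 0 < H := by rw [hH']; positivity
  have hHu : H ≤ k5 * Q ^ 2 := by
    rw [hH', div_le_iff₀ hπ0, hk5]
    calc k4 * Q ^ 2 = k4 * Q ^ 2 * 1 := by ring
      _ ≤ k4 * Q ^ 2 * (2 ^ (2*n+3) * π) := by gcongr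
      _ = _ := by ring
  have hK0 : 0 < K := by rw [hK]; positivity
  have hKu : K * ε ^ (2 * (n+1)) ≤ k6 := by
    rw [hK, hk6]
    have h1 : (1 + H) * ε ^ (2 * (n+1)) ≤ 1 + k5 * (C1 ^ n) ^ 2 := by
      calc (1 + H) * ε ^ (2 * (n+1)) = ε ^ (2 * (n+1)) + H * ε ^ (2 * (n+1)) := by ring
        _ ≤ 1 + k5 * Q ^ 2 * ε ^ (2 * (n+1)) := by
          gcongr
          exact pow_le_one₀ hε.le hε1
        _ = 1 + k5 * (Q * ε ^ (n+1)) ^ 2 := by ring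
        _ ≤ _ := by gcongr
    calc (1 + 2 * n) * (1 + H) * ε ^ (2 * (n+1)) = (1 + 2 * n) * ((1 + H) * ε ^ (2 * (n+1))) := by ring
      _ ≤ _ := by gcongr
  refine ⟨?_, ?_, ?_⟩
  · have h1 : 5 * K ^ 2 / ε ^ 2 * ε ^ (4 * n + 6) ≤ 5 * k6 ^ 2 := by
      calc 5 * K ^ 2 / ε ^ 2 * ε ^ (4 * n + 6) = 5 * (K * ε ^ (2 * (n+1))) ^ 2 := by
            rw [show 4 * n + 6 = 2 * (2 * (n+1)) + 2 by ring, pow_add, pow_mul', mul_pow]; field_simp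
        _ ≤ _ := by gcongr
    have hCD : C⁻¹ ≤ D1⁻¹ := by
      apply inv_anti₀ hD1p
      rw [hC]
      have : 0 < k1 ^ (n+1) * C1 ^ n := by positivity
      have : 0 < k1 * C1 ^ 2 := by positivity
      linarith
    have h2 : δ / 2 * τ / 2 = (4 * k2 * Q)⁻¹ * τ := by rw [hδ']; field_simp; norm_num
    rw [h2]
    calc C⁻¹ * ε ^ ((n+1) + (4 * n + 6) * (2 * n + 1)) * τ * (5 * K ^ 2 / ε ^ 2) ^ (2 * n + 1)
        = C⁻¹ * ε ^ (n+1) * τ * (5 * K ^ 2 / ε ^ 2 * ε ^ (4 * n + 6)) ^ (2 * n + 1) := by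
          rw [pow_add, pow_mul, mul_pow (5 * K ^ 2 / ε ^ 2)]; ring
      _ ≤ D1⁻¹ * ε ^ (n+1) * τ * (5 * k6 ^ 2) ^ (2 * n + 1) := by gcongr
      _ = (4 * k2 * C1 ^ n)⁻¹ * ε ^ (n+1) * τ := by rw [hD1]; field_simp
      _ ≤ (4 * k2 * Q)⁻¹ * τ := by
          refine mul_le_mul_of_nonneg_right ?_ hτ.le
          rw [inv_mul_le_iff₀ (by positivity), ← div_eq_mul_inv, le_div_iff₀ (by positivity)]
          calc ε ^ (n+1) * (4 * k2 * Q) = 4 * k2 * (Q * ε ^ (n+1)) := by ring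
            _ ≤ _ := by gcongr
  · have h1 : T ^ (n+1) / P = k1 ^ (n+1) * Q * a := by
      rw [pow_succ, hTn, hT', hP', pow_succ]; field_simp; ring
    rw [h1]
    calc ε ^ (n+2) * (k1 ^ (n+1) * Q * a) = k1 ^ (n+1) * (Q * ε ^ (n+1)) * ε * a := by ring
      _ ≤ k1 ^ (n+1) * C1 ^ n * 1 * a := by gcongr
      _ ≤ C * a := by
        refine mul_le_mul_of_nonneg_right ?_ ha.le
        rw [hC]
        have : 0 < k1 * C1 ^ 2 := by positivity
        linarith
  · have h1 : P * T = k1 * π ^ 2 * b := by rw [hT', hP']; field_simp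
    rw [h1]
    calc ε ^ (n+2) * (k1 * π ^ 2 * b) = k1 * (π * ε) ^ 2 * ε ^ n * b := by ring
      _ ≤ k1 * C1 ^ 2 * 1 * b := by
        gcongr
        exact pow_le_one₀ hε.le hε1
      _ ≤ C * b := by
        refine mul_le_mul_of_nonneg_right ?_ hb.le
        rw [hC]
        have : 0 < k1 ^ (n+1) * C1 ^ n := by positivity
        linarith

theorem thmM (n : ℕ) (hn : 1 ≤ n) : ∃ C : ℝ, 0 < C ∧ ∃ A : ℕ, ∀ (ε : ℝ), 0 < ε → ε ≤ 1 →
    ∀ (E Es : Set (Pt n)) (G : Set (Pt n × Vec n)) (a b τ : ℝ),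
    0 < a → 0 < b → 0 < τ → MeasurableSet Es → MeasurableSet G →
    volume E = ENNReal.ofReal a → volume Es = ENNReal.ofReal b → volume G = ENNReal.ofReal τ →
    (∀ z ∈ G, z.1 ∈ E) → (∀ z ∈ G, (dualM z).1 ∈ Es) →
    ε * (a * b) ^ (n+1) ≤ τ ^ (n+2) →
    ∃ (zb : Pt n × Vec n) (e : OrthonormalBasis (Fin n) ℝ (Vec n)) (r rs : Fin n → ℝ) (ρ : ℝ),
      0 < ρ ∧ (∀ j, 0 < r j) ∧ (∀ j, 0 < rs j) ∧ (∀ j, r j * rs j = ρ) ∧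
      ENNReal.ofReal (C⁻¹ * ε ^ A * τ) ≤ volume (G ∩ bil zb e r rs ρ) ∧
      (∏ j, r j) * ρ ≤ C * a ∧ (∏ j, rs j) * ρ ≤ C * b := by
  obtain ⟨C1, hC1, H1⟩ := step1 n
  obtain ⟨C, hC, A, HA⟩ := arithM n hn C1 hC1
  refine ⟨C, hC, A, ?_⟩
  intro ε hε hε1 E Es G a b τ ha hb hτ hEs hG vE vEs vG hGE hGEs hmain
  obtain ⟨x0, u0, y0, e, s, F, mF, hs, hF, vF, hPu, hW⟩ := H1 E Es G a b τ ha hb hτ hEs hG vE vEs vG hGE hGEs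
  have hn0 : (0:ℝ) < n := by exact_mod_cast hn
  set P := ∏ i, s i with hP
  have hP0 : 0 < P := Finset.prod_pos fun i _ => hs i
  obtain ⟨ω, hω⟩ : ∃ ω, ω = τ ^ 2 / (2 ^ (n+5) * (a * b)) := ⟨_, rfl⟩
  obtain ⟨T, hT⟩ : ∃ T, T = n * 2 ^ n * P * a / ω := ⟨_, rfl⟩
  obtain ⟨δ, hδ⟩ : ∃ δ, δ = ω / (4 ^ (n+1) * T ^ n) := ⟨_, rfl⟩
  obtain ⟨H, hH⟩ : ∃ H, H = n * 2 ^ (n+1) * b * T ^ n / (δ / 2 * τ * P) := ⟨_, rfl⟩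
  obtain ⟨K, hK⟩ : ∃ K, K = (1 + 2 * n) * (1 + H) := ⟨_, rfl⟩
  have hω0 : 0 < ω := by rw [hω]; positivity
  have hT0 : 0 < T := by rw [hT]; positivity
  have hδ0 : 0 < δ := by rw [hδ]; positivity
  have hH0 : 0 < H := by rw [hH]; positivity
  have hK0 : 0 < K := by rw [hK]; positivity
  have hPl : τ / (2^(n+3) * a) ≤ 2 ^ n * P := by
    have h1 : volume F ≤ volume {y : Vec n | ∀ i, |⟪y - 0, e i⟫| ≤ s i} :=
      measure_mono fun w hw => by simpa using hF w hw
    rw [box_vec, ← ENNReal.ofReal_prod_of_nonneg (fun i _ => by have := hs i; positivity), Finset.prod_mul_distrib] at h1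
    simp only [Finset.prod_const, Finset.card_univ, Fintype.card_fin] at h1
    exact (ENNReal.ofReal_le_ofReal_iff (by positivity)).mp (vF.trans h1)
  obtain ⟨R1, R2, R3⟩ := HA ε a b τ P ω T δ H K hε hε1 ha hb hτ hP0 hmain hPl hPu hω hT hδ hH hK
  have h2 := step2 hn E G a b τ ha hb hτ hG vE hGE x0 u0 y0 e s F mF hs hF vF hW ω T δ hω hT hδ
  obtain ⟨G4, hG4, v4, hY⟩ := step3 Es G b τ hb hτ hG vEs hGEs x0 u0 y0 e s hs T (δ / 2) hT0 (by positivity) h2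
  rw [← hP, ← hH] at hY
  have hG40 : volume G4 ≠ 0 := by
    refine (lt_of_lt_of_le ?_ v4).ne'
    rw [ENNReal.ofReal_pos]; positivity
  obtain ⟨zb, hzb, hv⟩ := step4 x0 u0 y0 e s hs T H K ε hT0 hH0 hK hε hε1 G4 hG40 (fun z hz => (hG4 hz).2) hY
  refine ⟨zb, e, fun j => ε * (T / s j), fun j => ε * s j, ε ^ 2 * T, by positivity, fun j => by have := hs j; positivity,
    fun j => by have := hs j; positivity, fun j => by have := (hs j).ne'; field_simp, ?_, ?_, ?_⟩
  · have h3 := (ENNReal.ofReal_le_ofReal R1).trans (v4.trans hv)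
    rw [ENNReal.ofReal_mul (by positivity), mul_comm] at h3
    refine ((ENNReal.mul_le_mul_iff_right ?_ (by finiteness)).mp h3).trans (measure_mono ?_)
    · have : 0 < (5 * K ^ 2 / ε ^ 2) ^ (2 * n + 1) := by positivity
      simpa using this
    · exact Set.inter_subset_inter_left _ fun z hz => (hG4 hz).1
  · refine le_trans (le_of_eq ?_) R2
    rw [Finset.prod_mul_distrib, Finset.prod_div_distrib]
    simp only [Finset.prod_const, Finset.card_univ, Fintype.card_fin]
    rw [← hP]; ring
  · refine le_trans (le_of_eq ?_) R3
    rw [Finset.prod_mul_distrib]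
    simp only [Finset.prod_const, Finset.card_univ, Fintype.card_fin]
    rw [← hP]; ring

theorem shear_mp {n : ℕ} (g : Vec n → ℝ) (hg : Measurable g) :
    MeasurePreserving (fun p : Pt n => ((p.1, p.2 + g p.1) : Pt n)) volume volume := by
  have := MeasurePreserving.skew_product (μa := (volume : Measure (Vec n)))
      (μb := (volume : Measure (Vec n))) (μc := (volume : Measure ℝ)) (μd := (volume : Measure ℝ))
      (f := id) (MeasurePreserving.id _) (g := fun a c => c + g a) (by unfold Function.uncurry; fun_prop)
      (Filter.Eventually.of_forall fun a => (measurePreserving_add_right volume (g a)).map_eq)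
  exact this

def shE {n : ℕ} (E : Set (Pt n)) : Set (Pt n) := (fun p : Pt n => ((p.1, p.2 + ‖p.1‖ ^ 2) : Pt n)) ⁻¹' E
def shS {n : ℕ} (E : Set (Pt n)) : Set (Pt n) := (fun p : Pt n => ((p.1, p.2 + -‖p.1‖ ^ 2) : Pt n)) ⁻¹' E

theorem shE_meas {n : ℕ} {E : Set (Pt n)} (hE : MeasurableSet E) : MeasurableSet (shE E) :=
  (shear_mp (fun x => ‖x‖ ^ 2) (by fun_prop)).measurable hE
theorem shS_meas {n : ℕ} {E : Set (Pt n)} (hE : MeasurableSet E) : MeasurableSet (shS E) :=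
  (shear_mp (fun x => -‖x‖ ^ 2) (by fun_prop)).measurable hE
theorem shE_vol {n : ℕ} {E : Set (Pt n)} (hE : MeasurableSet E) : volume (shE E) = volume E :=
  (shear_mp (fun x => ‖x‖ ^ 2) (by fun_prop)).measure_preimage hE.nullMeasurableSet
theorem shS_vol {n : ℕ} {E : Set (Pt n)} (hE : MeasurableSet E) : volume (shS E) = volume E :=
  (shear_mp (fun x => -‖x‖ ^ 2) (by fun_prop)).measure_preimage hE.nullMeasurableSet

/-- the incidence set in bilinear coordinates -/
def Gset {n : ℕ} (E Es : Set (Pt n)) : Set (Pt n × Vec n) :=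
  {z | z.1 ∈ shE E ∧ (dualM z).1 ∈ shS Es ∧ ‖z.1.1 - z.2‖ ≤ 1}

theorem Gset_meas {n : ℕ} {E Es : Set (Pt n)} (hE : MeasurableSet E) (hEs : MeasurableSet Es) :
    MeasurableSet (Gset E Es) :=
  (measurable_fst (shE_meas hE)).inter (((measurable_fst.comp dualM_mp.measurable) (shS_meas hEs)).inter
    (measurableSet_le (f := fun z : Pt n × Vec n => ‖z.1.1 - z.2‖) (by fun_prop) measurable_const))

theorem inc_eq {n : ℕ} {E Es : Set (Pt n)} (hE : MeasurableSet E) (hEs : MeasurableSet Es) :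
    incT0 n E Es = volume (Gset E Es) := by
  set G0 : Set (Pt n × Vec n) := {z | z.1 ∈ E ∧ (((z.2, z.1.2 - ‖z.1.1 - z.2‖ ^ 2) : Pt n) ∈ Es ∧ ‖z.1.1 - z.2‖ ≤ 1)} with hG0
  have mG0 : MeasurableSet G0 := by
    refine (measurable_fst hE).inter (MeasurableSet.inter ?_ (measurableSet_le (f := fun z : Pt n × Vec n => ‖z.1.1 - z.2‖) (by fun_prop) measurable_const))
    have : Measurable (fun z : Pt n × Vec n => ((z.2, z.1.2 - ‖z.1.1 - z.2‖ ^ 2) : Pt n)) := by fun_prop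
    exact this hEs
  have h1 : incT0 n E Es = volume G0 := by
    rw [Measure.volume_eq_prod, Measure.prod_apply mG0, incT0, ← lintegral_indicator hE]
    refine lintegral_congr fun x => ?_
    by_cases hx : x ∈ E
    · rw [Set.indicator_of_mem hx, radonT0, ← lintegral_indicator Metric.isClosed_closedBall.measurableSet,
        ← lintegral_sub_left_eq_self _ x.1]
      have mfib : MeasurableSet (Prod.mk x ⁻¹' G0) := measurable_prodMk_left mG0
      rw [← lintegral_indicator_one mfib]
      refine lintegral_congr fun y => ?_
      by_cases hb : ‖x.1 - y‖ ≤ 1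
      · rw [Set.indicator_of_mem (by simpa using hb)]
        by_cases hy : ((y, x.2 - ‖x.1 - y‖ ^ 2) : Pt n) ∈ Es
        · rw [Set.indicator_of_mem (by simpa using hy), Set.indicator_of_mem (show y ∈ Prod.mk x ⁻¹' G0 from ⟨hx, hy, hb⟩)]
          simp
        · rw [Set.indicator_of_notMem (by simpa using hy), Set.indicator_of_notMem (fun h => hy h.2.1)]
      · rw [Set.indicator_of_notMem (by simpa using hb), Set.indicator_of_notMem (fun h => hb h.2.2)]
    · rw [Set.indicator_of_notMem hx]
      have : Prod.mk x ⁻¹' G0 = ∅ := by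
        ext w; simp only [Set.mem_preimage, Set.mem_empty_iff_false, iff_false]
        intro hw; exact hx hw.1
      simp [this]
  rw [h1]
  have hmp : MeasurePreserving (Prod.map (fun p : Pt n => ((p.1, p.2 + ‖p.1‖ ^ 2) : Pt n)) (id : Vec n → Vec n)) volume volume :=
    (shear_mp (fun x => ‖x‖ ^ 2) (by fun_prop)).prod (MeasurePreserving.id volume)
  rw [← hmp.measure_preimage mG0.nullMeasurableSet]
  have hset : Prod.map (fun p : Pt n => ((p.1, p.2 + ‖p.1‖ ^ 2) : Pt n)) (id : Vec n → Vec n) ⁻¹' G0 = Gset E Es := by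
    ext z
    have h2 : z.1.2 + ‖z.1.1‖ ^ 2 - ‖z.1.1 - z.2‖ ^ 2 = z.1.2 + 2 * ⟪z.1.1, z.2⟫ + -‖z.2‖ ^ 2 := by
      rw [norm_sub_sq_real]; ring
    simp only [hG0, Gset, shE, shS, dualM, Set.mem_preimage, Set.mem_ofPred_eq, Prod.map, id, h2]
  rw [hset]

theorem vol_slab {n : ℕ} (e : OrthonormalBasis (Fin n) ℝ (Vec n)) (x0 : Vec n) (r : Fin n → ℝ) (hr : ∀ j, 0 < r j) (ρ : ℝ) (hρ : 0 < ρ)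
    (g : Vec n → ℝ) (hg : Measurable g) :
    volume {p : Pt n | (∀ j, |⟪p.1 - x0, e j⟫| ≤ r j) ∧ |p.2 + g p.1| ≤ ρ} = ENNReal.ofReal (2 ^ (n+1) * ((∏ j, r j) * ρ)) := by
  have mbox : MeasurableSet {y : Vec n | ∀ i, |⟪y - x0, e i⟫| ≤ r i} := by
    have : {y : Vec n | ∀ i, |⟪y - x0, e i⟫| ≤ r i} = ⋂ i, {y : Vec n | |⟪y - x0, e i⟫| ≤ r i} := by ext; simp
    rw [this]
    exact MeasurableSet.iInter fun i => measurableSet_le (by fun_prop) measurable_const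
  have hset : {p : Pt n | (∀ j, |⟪p.1 - x0, e j⟫| ≤ r j) ∧ |p.2 + g p.1| ≤ ρ} =
      (fun p : Pt n => ((p.1, p.2 + g p.1) : Pt n)) ⁻¹' ({y : Vec n | ∀ i, |⟪y - x0, e i⟫| ≤ r i} ×ˢ Set.Icc (-ρ) ρ) := by
    ext p; simp [abs_le]
  rw [hset, (shear_mp g hg).measure_preimage (mbox.prod measurableSet_Icc).nullMeasurableSet,
    Measure.volume_eq_prod, Measure.prod_prod, box_vec, Real.volume_Icc,
    ← ENNReal.ofReal_prod_of_nonneg (fun i _ => by have := hr i; positivity), Finset.prod_mul_distrib,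
    ← ENNReal.ofReal_mul (mul_nonneg (by positivity) (Finset.prod_nonneg fun i _ => (hr i).le))]
  congr 1
  simp; ring

theorem open_fst {n : ℕ} (zb : Pt n × Pt n) (e : Fin n → Vec n) (r rs : Fin n → ℝ) (ρ : ℝ) :
    IsOpen (Prod.fst '' ballI n zb e r rs ρ) := by
  set O : Set (Pt n × Vec n) := {z | (∀ j, |⟪z.1.1 - zb.1.1, e j⟫| < r j) ∧
    |z.1.2 - zb.2.2 - ‖z.1.1 - zb.2.1‖ ^ 2| < ρ ∧
    (∀ j, |⟪z.2 - zb.2.1, e j⟫| < rs j) ∧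
    |z.1.2 - ‖z.2 - z.1.1‖ ^ 2 - zb.1.2 + ‖z.2 - zb.1.1‖ ^ 2| < ρ} with hO
  have hOo : IsOpen O := by
    refine IsOpen.inter ?_ (IsOpen.inter ?_ (IsOpen.inter ?_ ?_))
    · show IsOpen {z : Pt n × Vec n | ∀ j, |⟪z.1.1 - zb.1.1, e j⟫| < r j}
      simp only [Set.ofPred_forall]
      exact isOpen_iInter_of_finite fun j => isOpen_lt (by fun_prop) (by fun_prop)
    · exact isOpen_lt (f := fun z : Pt n × Vec n => |z.1.2 - zb.2.2 - ‖z.1.1 - zb.2.1‖ ^ 2|) (by fun_prop) (by fun_prop)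
    · show IsOpen {z : Pt n × Vec n | ∀ j, |⟪z.2 - zb.2.1, e j⟫| < rs j}
      simp only [Set.ofPred_forall]
      exact isOpen_iInter_of_finite fun j => isOpen_lt (by fun_prop) (by fun_prop)
    · exact isOpen_lt (f := fun z : Pt n × Vec n => |z.1.2 - ‖z.2 - z.1.1‖ ^ 2 - zb.1.2 + ‖z.2 - zb.1.1‖ ^ 2|) (by fun_prop) (by fun_prop)
  have : Prod.fst '' ballI n zb e r rs ρ = Prod.fst '' O := by
    ext x
    constructor
    · rintro ⟨⟨x, y⟩, ⟨h0, h1, h2, h3, h4⟩, rfl⟩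
      refine ⟨(x, y.1), ⟨h1, h2, h3, ?_⟩, rfl⟩
      simp only at h0 h4 ⊢
      rw [← h0]; exact h4
    · rintro ⟨⟨x, y⟩, ⟨h1, h2, h3, h4⟩, rfl⟩
      exact ⟨(x, (y, x.2 - ‖y - x.1‖ ^ 2)), ⟨rfl, h1, h2, h3, h4⟩, rfl⟩
  rw [this]
  exact isOpenMap_fst _ hOo

theorem open_snd {n : ℕ} (zb : Pt n × Pt n) (e : Fin n → Vec n) (r rs : Fin n → ℝ) (ρ : ℝ) :
    IsOpen (Prod.snd '' ballI n zb e r rs ρ) := by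
  set O : Set (Pt n × Vec n) := {z | (∀ j, |⟪z.2 - zb.1.1, e j⟫| < r j) ∧
    |z.1.2 + ‖z.1.1 - z.2‖ ^ 2 - zb.2.2 - ‖z.2 - zb.2.1‖ ^ 2| < ρ ∧
    (∀ j, |⟪z.1.1 - zb.2.1, e j⟫| < rs j) ∧
    |z.1.2 - zb.1.2 + ‖z.1.1 - zb.1.1‖ ^ 2| < ρ} with hO
  have hOo : IsOpen O := by
    refine IsOpen.inter ?_ (IsOpen.inter ?_ (IsOpen.inter ?_ ?_))
    · show IsOpen {z : Pt n × Vec n | ∀ j, |⟪z.2 - zb.1.1, e j⟫| < r j}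
      simp only [Set.ofPred_forall]
      exact isOpen_iInter_of_finite fun j => isOpen_lt (by fun_prop) (by fun_prop)
    · exact isOpen_lt (f := fun z : Pt n × Vec n => |z.1.2 + ‖z.1.1 - z.2‖ ^ 2 - zb.2.2 - ‖z.2 - zb.2.1‖ ^ 2|) (by fun_prop) (by fun_prop)
    · show IsOpen {z : Pt n × Vec n | ∀ j, |⟪z.1.1 - zb.2.1, e j⟫| < rs j}
      simp only [Set.ofPred_forall]
      exact isOpen_iInter_of_finite fun j => isOpen_lt (by fun_prop) (by fun_prop)
    · exact isOpen_lt (f := fun z : Pt n × Vec n => |z.1.2 - zb.1.2 + ‖z.1.1 - zb.1.1‖ ^ 2|) (by fun_prop) (by fun_prop)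
  have : Prod.snd '' ballI n zb e r rs ρ = Prod.fst '' O := by
    ext x
    constructor
    · rintro ⟨⟨x, y⟩, ⟨h0, h1, h2, h3, h4⟩, rfl⟩
      refine ⟨(y, x.1), ⟨h1, ?_, h3, h4⟩, rfl⟩
      simp only at h0 h2 ⊢
      have : y.2 + ‖y.1 - x.1‖ ^ 2 = x.2 := by rw [h0]; ring
      rw [this]; exact h2
    · rintro ⟨⟨y, x⟩, ⟨h1, h2, h3, h4⟩, rfl⟩
      refine ⟨((x, y.2 + ‖y.1 - x‖ ^ 2), y), ⟨?_, h1, h2, h3, h4⟩, rfl⟩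
      simp
  rw [this]
  exact isOpenMap_fst _ hOo

theorem thmT (n : ℕ) (hn : 1 ≤ n) : ∃ C : ℝ, 0 < C ∧ ∃ A : ℕ, ∀ (ε : ℝ), 0 < ε → ε ≤ 1 →
    ∀ (E Es : Set (Pt n)) (a b τ : ℝ),
    0 < a → 0 < b → 0 < τ → MeasurableSet E → MeasurableSet Es →
    volume E = ENNReal.ofReal a → volume Es = ENNReal.ofReal b → incT0 n E Es = ENNReal.ofReal τ →
    ε * (a * b) ^ (n+1) ≤ τ ^ (n+2) →
    ∃ (zb : Pt n × Pt n) (e : Fin n → Vec n) (r rs : Fin n → ℝ) (ρ : ℝ),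
      IsBallParams n zb e r rs ρ ∧
      ENNReal.ofReal (C⁻¹ * ε ^ A * τ) ≤ incT0 n (E ∩ Prod.fst '' ballI n zb e r rs ρ)
              (Es ∩ Prod.snd '' ballI n zb e r rs ρ) ∧
      volume (Prod.fst '' ballI n zb e r rs ρ) ≤ ENNReal.ofReal (C * a) ∧
      volume (Prod.snd '' ballI n zb e r rs ρ) ≤ ENNReal.ofReal (C * b) := by
  obtain ⟨C, hC, A, HM⟩ := thmM n hn
  refine ⟨2 ^ (n+1) * C, by positivity, A, ?_⟩
  intro ε hε hε1 E Es a b τ ha hb hτ hE hEs vE vEs vG hmain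
  obtain ⟨zb, e, r, rs, ρ, hρ, hr, hrs, hrr, hG, va, vb⟩ := HM ε hε hε1 (shE E) (shS Es) (Gset E Es) a b τ ha hb hτ (shS_meas hEs)
    (Gset_meas hE hEs) ((shE_vol hE).trans vE) ((shS_vol hEs).trans vEs) ((inc_eq hE hEs).symm.trans vG)
    (fun z hz => hz.1) (fun z hz => hz.2.1) hmain
  set zc : Pt n × Pt n := ((zb.1.1, zb.1.2 + ‖zb.1.1‖ ^ 2), (zb.2, zb.1.2 + 2 * ⟪zb.1.1, zb.2⟫ - ‖zb.2‖ ^ 2)) with hzc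
  refine ⟨zc, e, r, rs, ρ, ⟨?_, hρ, e.orthonormal, hr, hrs, hrr⟩, ?_, ?_, ?_⟩
  · simp only [hzc]; rw [norm_sub_sq_real, real_inner_comm]; ring
  · rw [inc_eq (hE.inter (open_fst _ _ _ _ _).measurableSet) (hEs.inter (open_snd _ _ _ _ _).measurableSet)]
    have hle : C⁻¹ * ε ^ A * τ ≥ (2 ^ (n+1) * C)⁻¹ * ε ^ A * τ := by
      have : (2 ^ (n+1) * C)⁻¹ ≤ C⁻¹ := by
        apply inv_anti₀ hC
        have : (1:ℝ) ≤ 2 ^ (n+1) := one_le_pow₀ (by norm_num)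
        nlinarith
      gcongr
    refine (ENNReal.ofReal_le_ofReal hle).trans (hG.trans (measure_mono ?_))
    rintro z ⟨⟨h1, h2, h3⟩, k1, k2, k3, k4⟩
    have hball : (((z.1.1, z.1.2 + ‖z.1.1‖ ^ 2), (z.2, z.1.2 + 2 * ⟪z.1.1, z.2⟫ + -‖z.2‖ ^ 2)) : Pt n × Pt n) ∈ ballI n zc e r rs ρ := by
      refine ⟨?_, k1, ?_, k2, ?_⟩
      · simp only; rw [norm_sub_sq_real, real_inner_comm]; ring
      · simp only [hzc]
        convert k3 using 2
        rw [norm_sub_sq_real, inner_sub_left]; ring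
      · simp only [hzc]
        convert k4 using 2
        rw [norm_sub_sq_real, inner_sub_left, real_inner_comm zb.1.1 z.2]; ring
    exact ⟨⟨h1, _, hball, rfl⟩, ⟨h2, _, hball, rfl⟩, h3⟩
  · calc _ ≤ volume {p : Pt n | (∀ j, |⟪p.1 - zc.1.1, e j⟫| ≤ r j) ∧ |p.2 + (fun x => -zc.2.2 - ‖x - zc.2.1‖ ^ 2) p.1| ≤ ρ} := by
          refine measure_mono ?_
          rintro _ ⟨z, ⟨h0, h1, h2, h3, h4⟩, rfl⟩
          refine ⟨fun j => (h1 j).le, ?_⟩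
          have e1 : z.1.2 + (-zc.2.2 - ‖z.1.1 - zc.2.1‖ ^ 2) = z.1.2 - zc.2.2 - ‖z.1.1 - zc.2.1‖ ^ 2 := by ring
          show |z.1.2 + (-zc.2.2 - ‖z.1.1 - zc.2.1‖ ^ 2)| ≤ ρ
          rw [e1]; exact h2.le
      _ = _ := vol_slab e zc.1.1 r hr ρ hρ (fun x => -zc.2.2 - ‖x - zc.2.1‖ ^ 2) (by fun_prop)
      _ ≤ _ := by
        apply ENNReal.ofReal_le_ofReal
        rw [mul_assoc]; exact mul_le_mul_of_nonneg_left (by first | exact va | exact vb) (by positivity)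
  · calc _ ≤ volume {p : Pt n | (∀ j, |⟪p.1 - zc.2.1, e j⟫| ≤ rs j) ∧ |p.2 + (fun x => -zc.1.2 + ‖x - zc.1.1‖ ^ 2) p.1| ≤ ρ} := by
          refine measure_mono ?_
          rintro _ ⟨z, ⟨h0, h1, h2, h3, h4⟩, rfl⟩
          refine ⟨fun j => (h3 j).le, ?_⟩
          have e1 : z.2.2 + (-zc.1.2 + ‖z.2.1 - zc.1.1‖ ^ 2) = z.2.2 - zc.1.2 + ‖z.2.1 - zc.1.1‖ ^ 2 := by ring
          show |z.2.2 + (-zc.1.2 + ‖z.2.1 - zc.1.1‖ ^ 2)| ≤ ρ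
          rw [e1]; exact h4.le
      _ = _ := vol_slab e zc.2.1 rs hrs ρ hρ (fun x => -zc.1.2 + ‖x - zc.1.1‖ ^ 2) (by fun_prop)
      _ ≤ _ := by
        apply ENNReal.ofReal_le_ofReal
        rw [mul_assoc]; exact mul_le_mul_of_nonneg_left (by first | exact va | exact vb) (by positivity)

theorem inc_le_Lam {n : ℕ} {E Es : Set (Pt n)} (hE : MeasurableSet E) (hEs : MeasurableSet Es) :
    incT0 n E Es ≤ Lam0 n (volume E) (volume Es) := by
  unfold Lam0
  exact le_iSup_of_le E (le_iSup_of_le Es (le_iSup_of_le hE (le_iSup_of_le hEs (le_iSup_of_le rfl (le_iSup_of_le rfl le_rfl)))))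

theorem Lam_lt_top {n : ℕ} (t ts : ℝ≥0∞) (ht : t < ⊤) : Lam0 n t ts < ⊤ := by
  have hb : volume (Metric.closedBall (0 : Vec n) 1) < ⊤ := measure_closedBall_lt_top
  refine lt_of_le_of_lt ?_ (ENNReal.mul_lt_top hb ht)
  unfold Lam0
  refine iSup_le fun E => iSup_le fun Es => iSup_le fun hE => iSup_le fun hEs => iSup_le fun h1 => iSup_le fun h2 => ?_
  rw [← h1, incT0, ← setLIntegral_const]
  refine lintegral_mono fun x => ?_
  rw [radonT0]
  calc _ ≤ ∫⁻ t in Metric.closedBall (0 : Vec n) 1, 1 := by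
        refine lintegral_mono fun t => ?_
        exact Set.indicator_le_self' (fun _ _ => zero_le) _ |>.trans (by simp)
    _ = _ := by simp

theorem Lam_lower {n : ℕ} (R S h : ℝ) (hR : 0 < R) (hS : 0 < S) (hh : 0 < h)
    (h1 : 4 * n * (R * S) ≤ h) (h2 : n * R + n * S ≤ 1) :
    ENNReal.ofReal (4 ^ n * (R ^ n * S ^ n * h)) ≤
      Lam0 n (ENNReal.ofReal (2 ^ (n+1) * (R ^ n * h))) (ENNReal.ofReal (2 ^ (n+1) * (S ^ n * h))) := by
  set e : OrthonormalBasis (Fin n) ℝ (Vec n) := EuclideanSpace.basisFun (Fin n) ℝ with he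
  have mbox : ∀ R : ℝ, MeasurableSet {y : Vec n | ∀ i, |⟪y - 0, e i⟫| ≤ R} := by
    intro R
    have : {y : Vec n | ∀ i, |⟪y - 0, e i⟫| ≤ R} = ⋂ i, {y : Vec n | |⟪y - 0, e i⟫| ≤ R} := by ext; simp
    rw [this]
    exact MeasurableSet.iInter fun i => measurableSet_le (by fun_prop) measurable_const
  have mslab : ∀ (R : ℝ) (g : Vec n → ℝ), Measurable g → MeasurableSet {p : Pt n | (∀ j, |⟪p.1 - 0, e j⟫| ≤ R) ∧ |p.2 + g p.1| ≤ h} := by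
    intro R g hg
    refine (measurable_fst (mbox R)).inter ?_
    exact measurableSet_le (f := fun p : Pt n => |p.2 + g p.1|) (by fun_prop) measurable_const
  set E : Set (Pt n) := {p : Pt n | (∀ j, |⟪p.1 - 0, e j⟫| ≤ R) ∧ |p.2 + (fun x => -‖x‖ ^ 2) p.1| ≤ h} with hE
  set Es : Set (Pt n) := {p : Pt n | (∀ j, |⟪p.1 - 0, e j⟫| ≤ S) ∧ |p.2 + (fun x => ‖x‖ ^ 2) p.1| ≤ h} with hEs
  have mE : MeasurableSet E := mslab R (fun x => -‖x‖ ^ 2) (by fun_prop)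
  have mEs : MeasurableSet Es := mslab S (fun x => ‖x‖ ^ 2) (by fun_prop)
  have vE : volume E = ENNReal.ofReal (2 ^ (n+1) * (R ^ n * h)) := by
    refine (vol_slab e 0 (fun _ => R) (fun _ => hR) h hh (fun x => -‖x‖ ^ 2) (by fun_prop)).trans ?_; simp
  have vEs : volume Es = ENNReal.ofReal (2 ^ (n+1) * (S ^ n * h)) := by
    refine (vol_slab e 0 (fun _ => S) (fun _ => hS) h hh (fun x => ‖x‖ ^ 2) (by fun_prop)).trans ?_; simp
  rw [← vE, ← vEs]
  refine le_trans ?_ (inc_le_Lam mE mEs)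
  rw [inc_eq mE mEs]
  have hV : volume (({y : Vec n | ∀ i, |⟪y - 0, e i⟫| ≤ R} ×ˢ Set.Icc (-(h/2)) (h/2)) ×ˢ {y : Vec n | ∀ i, |⟪y - 0, e i⟫| ≤ S} : Set (Pt n × Vec n))
      = ENNReal.ofReal (4 ^ n * (R ^ n * S ^ n * h)) := by
    rw [Measure.volume_eq_prod, Measure.prod_prod, Measure.volume_eq_prod, Measure.prod_prod, box_vec, box_vec, Real.volume_Icc, show h / 2 - -(h / 2) = h by ring]
    simp only [Finset.prod_const, Finset.card_univ, Fintype.card_fin]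
    rw [← ENNReal.ofReal_pow (by positivity), ← ENNReal.ofReal_pow (by positivity), ← ENNReal.ofReal_mul (by positivity), ← ENNReal.ofReal_mul (by positivity)]
    congr 1
    rw [show (4:ℝ) = 2 * 2 by norm_num, mul_pow, mul_pow, mul_pow]; ring
  rw [← hV]
  refine measure_mono ?_
  rintro ⟨⟨x, u⟩, y⟩ ⟨⟨hx, hu⟩, hy⟩
  simp only [Set.mem_ofPred_eq] at hx hy
  have hx' : ∀ i, |x i| ≤ R := fun i => by simpa [he, EuclideanSpace.inner_single_right] using hx i
  have hy' : ∀ i, |y i| ≤ S := fun i => by simpa [he, EuclideanSpace.inner_single_right] using hy i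
  have hnorm : ∀ (w : Vec n) (Q : ℝ), (∀ i, |w i| ≤ Q) → ‖w‖ ≤ n * Q := by
    intro w Q hw
    have : w = ∑ i, ⟪e i, w⟫ • e i := (e.sum_repr' w).symm
    rw [this]
    refine (norm_sum_le _ _).trans ?_
    calc _ ≤ ∑ i : Fin n, Q := by
          refine Finset.sum_le_sum fun i _ => ?_
          rw [norm_smul, e.norm_eq_one, mul_one, Real.norm_eq_abs]
          simpa [he, EuclideanSpace.inner_single_left] using hw i
      _ = _ := by simp
  have hin : |⟪x, y⟫| ≤ n * (R * S) := by
    rw [PiLp.inner_apply]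
    refine (Finset.abs_sum_le_sum_abs _ _).trans ?_
    calc _ ≤ ∑ i : Fin n, R * S := by
          refine Finset.sum_le_sum fun i _ => ?_
          simp only [RCLike.inner_apply, conj_trivial, abs_mul]
          rw [mul_comm]
          exact mul_le_mul (hx' i) (hy' i) (abs_nonneg _) hR.le
      _ = _ := by simp
  refine ⟨⟨hx, ?_⟩, ⟨hy, ?_⟩, ?_⟩
  · show |u + ‖x‖ ^ 2 + -‖x‖ ^ 2| ≤ h
    rw [add_neg_cancel_right, abs_le]
    exact ⟨by linarith [hu.1], by linarith [hu.2]⟩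
  · show |u + 2 * ⟪x, y⟫ + -‖y‖ ^ 2 + ‖y‖ ^ 2| ≤ h
    rw [neg_add_cancel_right]
    rw [abs_le] at hin ⊢
    have := hu.1; have := hu.2
    simp only at *
    exact ⟨by linarith [hin.1], by linarith [hin.2]⟩
  · show ‖x - y‖ ≤ 1
    exact (norm_sub_le _ _).trans ((add_le_add (hnorm x R hx') (hnorm y S hy')).trans h2)

theorem Lam_main (n : ℕ) (hn : 1 ≤ n) (c : ℝ) (hc : 0 < c) : ∃ c' : ℝ, 0 < c' ∧ c' ≤ 1 ∧
    ∀ a b : ℝ, 0 < a → 0 < b → c * b ^ (n+1) ≤ a → c * a ^ (n+1) ≤ b →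
      ∃ t : ℝ, 0 < t ∧ ENNReal.ofReal t ≤ Lam0 n (ENNReal.ofReal a) (ENNReal.ofReal b) ∧
        c' * (a * b) ^ (n+1) ≤ t ^ (n+2) := by
  have hn0 : (0:ℝ) < n := by exact_mod_cast hn
  obtain ⟨D, hD⟩ : ∃ D : ℝ, D = (2 * n) ^ n := ⟨_, rfl⟩
  have hD0 : 0 < D := by rw [hD]; positivity
  obtain ⟨K, hK⟩ : ∃ K : ℝ, K = (4 * n) ^ n + D ^ (n+2) / c + 1 := ⟨_, rfl⟩
  have hK0 : 0 < K := by rw [hK]; positivity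
  have hK1 : (4 * n) ^ n ≤ K := by rw [hK]; have : 0 < D ^ (n+2) / c := by positivity
                                   linarith
  have hK2 : D ^ (n+2) / c ≤ K := by rw [hK]; have : 0 < (4 * (n:ℝ)) ^ n := by positivity
                                     linarith
  have hK3 : 1 ≤ K := by
    rw [hK]; have : 0 < D ^ (n+2) / c := by positivity
    have : 0 < (4 * (n:ℝ)) ^ n := by positivity
    linarith
  refine ⟨1 / (4 ^ (n+2) * K), by positivity, ?_, ?_⟩
  · rw [div_le_one (by positivity)]
    have : (1:ℝ) ≤ 4 ^ (n+2) := one_le_pow₀ (by norm_num)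
    nlinarith
  intro a b ha hb hab hba
  obtain ⟨h, hh, hhp⟩ : ∃ h : ℝ, 0 < h ∧ h ^ (n+2) = K * (a * b) := by
    refine ⟨(K * (a * b)) ^ ((1:ℝ) / ((n+2 : ℕ):ℝ)), by positivity, ?_⟩
    rw [← Real.rpow_natCast, ← Real.rpow_mul (by positivity), one_div, inv_mul_cancel₀ (by positivity), Real.rpow_one]
  have root : ∀ w : ℝ, 0 < w → ∃ R : ℝ, 0 < R ∧ R ^ n = w := by
    intro w hw
    refine ⟨w ^ ((1:ℝ) / (n:ℝ)), by positivity, ?_⟩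
    rw [← Real.rpow_natCast, ← Real.rpow_mul (by positivity), one_div, inv_mul_cancel₀ (by positivity), Real.rpow_one]
  obtain ⟨R, hR, hRn⟩ := root (a / (2 ^ (n+1) * h)) (by positivity)
  obtain ⟨S, hS, hSn⟩ := root (b / (2 ^ (n+1) * h)) (by positivity)
  have key : ∀ a b : ℝ, 0 < a → 0 < b → c * a ^ (n+1) ≤ b → h ^ (n+2) = K * (a * b) → ∀ R : ℝ, 0 < R → R ^ n = a / (2 ^ (n+1) * h) → n * R ≤ 1/2 := by
    intro a b ha hb hba hhp R hR hRn
    have h1 : D * a ≤ h := by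
      refine le_of_pow_le_pow_left₀ (n := n+2) (by omega) hh.le ?_
      rw [hhp, mul_pow]
      have : D ^ (n+2) ≤ K * c := by rwa [div_le_iff₀ hc] at hK2
      calc D ^ (n+2) * a ^ (n+2) ≤ K * c * a ^ (n+2) := by gcongr
        _ = K * (a * (c * a ^ (n+1))) := by ring
        _ ≤ _ := by gcongr
    have h2 : (2 * n * R) ^ n ≤ 1 ^ n := by
      rw [mul_pow, ← hD, hRn, one_pow, ← mul_div_assoc, div_le_one (by positivity)]
      have : (1:ℝ) ≤ 2 ^ (n+1) := one_le_pow₀ (by norm_num)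
      nlinarith
    have := le_of_pow_le_pow_left₀ (by omega) (by norm_num) h2
    linarith
  have e1 := key a b ha hb hba hhp R hR hRn
  have e2 := key b a hb ha hab (by rw [hhp, mul_comm a b]) S hS hSn
  have e3 : 4 * n * (R * S) ≤ h := by
    refine le_of_pow_le_pow_left₀ (n := n) (by omega) hh.le ?_
    rw [mul_pow, mul_pow R S, hRn, hSn]
    have : (a / (2 ^ (n+1) * h)) * (b / (2 ^ (n+1) * h)) = (a * b) / (4 ^ (n+1) * h ^ 2) := by
      rw [div_mul_div_comm, show (4:ℝ) = 2 * 2 by norm_num, mul_pow]; congr 1; ring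
    rw [this, ← mul_div_assoc, div_le_iff₀ (by positivity)]
    have h4 : (1:ℝ) ≤ 4 ^ (n+1) := one_le_pow₀ (by norm_num)
    calc (4 * (n:ℝ)) ^ n * (a * b) ≤ K * (a * b) := by gcongr
      _ = 1 * h ^ (n+2) := by rw [hhp, one_mul]
      _ ≤ 4 ^ (n+1) * h ^ (n+2) := by gcongr
      _ = _ := by ring
  have := Lam_lower R S h hR hS hh e3 (by linarith)
  rw [hRn, hSn] at this
  have f1 : ∀ a : ℝ, 2 ^ (n+1) * (a / (2 ^ (n+1) * h) * h) = a := by intro a; field_simp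
  rw [f1, f1] at this
  refine ⟨_, ?_, this, ?_⟩
  · positivity
  · have f2 : 4 ^ n * (a / (2 ^ (n+1) * h) * (b / (2 ^ (n+1) * h)) * h) = a * b / (4 * h) := by
      rw [show (4:ℝ) ^ n = 2 ^ n * 2 ^ n by rw [← mul_pow]; norm_num]; field_simp; ring
    rw [f2, div_pow, mul_pow 4 h, hhp]
    apply le_of_eq
    field_simp
    ring

/-- quasiextremal pairs for `Λ₀` with weakly comparable measures
`|E| ≥ c|E*|^d`, `|E*| ≥ c|E|^d` interact strongly with projections of a ball. -/
theorem stmt5 (d : ℕ) (hd : 2 ≤ d) (c : ℝ) (hc : 0 < c) :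
    ∃ C A : ℝ, 0 < C ∧ 0 < A ∧
      ∀ (ε : ℝ), 0 < ε →
      ∀ (E Es : Set (Pt (d - 1))), MeasurableSet E → MeasurableSet Es →
        0 < volume E → volume E < ⊤ → 0 < volume Es → volume Es < ⊤ →
        ENNReal.ofReal c * volume Es ^ d ≤ volume E →
        ENNReal.ofReal c * volume E ^ d ≤ volume Es →
        ENNReal.ofReal ε * Lam0 (d - 1) (volume E) (volume Es) ≤ incT0 (d - 1) E Es →
        ∃ (zb : Pt (d - 1) × Pt (d - 1)) (e : Fin (d - 1) → Vec (d - 1))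
          (r rs : Fin (d - 1) → ℝ) (ρ : ℝ),
          IsBallParams (d - 1) zb e r rs ρ ∧
          ENNReal.ofReal (C⁻¹ * ε ^ A) * incT0 (d - 1) E Es ≤
            incT0 (d - 1) (E ∩ Prod.fst '' ballI (d - 1) zb e r rs ρ)
              (Es ∩ Prod.snd '' ballI (d - 1) zb e r rs ρ) ∧
          volume (Prod.fst '' ballI (d - 1) zb e r rs ρ) ≤ ENNReal.ofReal C * volume E ∧
          volume (Prod.snd '' ballI (d - 1) zb e r rs ρ) ≤ ENNReal.ofReal C * volume Es := by
  obtain ⟨n, rfl⟩ : ∃ n, d = n + 1 := ⟨d - 1, by omega⟩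
  have hn : 1 ≤ n := by omega
  simp only [Nat.add_sub_cancel]
  obtain ⟨C, hC, A, HT⟩ := thmT n hn
  obtain ⟨c', hc', hc1, HL⟩ := Lam_main n hn c hc
  refine ⟨C / c' ^ A, (((n + 2) * A + 1 : ℕ) : ℝ), by positivity, by positivity, ?_⟩
  intro ε hε E Es hE hEs E0 E1 Es0 Es1 hab hba hmain
  obtain ⟨a, hadef⟩ : ∃ a, a = (volume E).toReal := ⟨_, rfl⟩
  obtain ⟨b, hbdef⟩ : ∃ b, b = (volume Es).toReal := ⟨_, rfl⟩
  have ha : 0 < a := by rw [hadef]; exact ENNReal.toReal_pos E0.ne' E1.ne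
  have hb : 0 < b := by rw [hbdef]; exact ENNReal.toReal_pos Es0.ne' Es1.ne
  have vE : volume E = ENNReal.ofReal a := by rw [hadef, ENNReal.ofReal_toReal E1.ne]
  have vEs : volume Es = ENNReal.ofReal b := by rw [hbdef, ENNReal.ofReal_toReal Es1.ne]
  have hab' : c * b ^ (n+1) ≤ a := by
    rw [vE, vEs, ← ENNReal.ofReal_pow hb.le, ← ENNReal.ofReal_mul hc.le] at hab
    exact (ENNReal.ofReal_le_ofReal_iff ha.le).1 hab
  have hba' : c * a ^ (n+1) ≤ b := by
    rw [vE, vEs, ← ENNReal.ofReal_pow ha.le, ← ENNReal.ofReal_mul hc.le] at hba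
    exact (ENNReal.ofReal_le_ofReal_iff hb.le).1 hba
  obtain ⟨t, ht, htL, htp⟩ := HL a b ha hb hab' hba'
  rw [← vE, ← vEs] at htL
  have hLtop : Lam0 n (volume E) (volume Es) < ⊤ := Lam_lt_top _ _ E1
  have hincL : incT0 n E Es ≤ Lam0 n (volume E) (volume Es) := inc_le_Lam hE hEs
  have hL0 : 0 < Lam0 n (volume E) (volume Es) := lt_of_lt_of_le (ENNReal.ofReal_pos.2 ht) htL
  have hε1 : ε ≤ 1 := by
    have h1 := hmain.trans hincL
    rw [← ENNReal.ofReal_le_one]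
    by_contra hcon
    push Not at hcon
    have := ENNReal.mul_lt_mul_left hL0.ne' hLtop.ne hcon
    rw [one_mul] at this
    exact absurd h1 (not_le.2 this)
  have hinctop : incT0 n E Es ≠ ⊤ := (hincL.trans_lt hLtop).ne
  obtain ⟨τ, hτdef⟩ : ∃ τ, τ = (incT0 n E Es).toReal := ⟨_, rfl⟩
  have vτ : incT0 n E Es = ENNReal.ofReal τ := by rw [hτdef, ENNReal.ofReal_toReal hinctop]
  have hτ' : ε * t ≤ τ := by
    rw [hτdef, ← ENNReal.ofReal_le_iff_le_toReal hinctop, ENNReal.ofReal_mul hε.le]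
    exact le_trans (by gcongr) hmain
  have hτ : 0 < τ := lt_of_lt_of_le (by positivity) hτ'
  have hm : (c' * ε ^ (n+2)) * (a * b) ^ (n+1) ≤ τ ^ (n+2) := by
    calc _ = ε ^ (n+2) * (c' * (a * b) ^ (n+1)) := by ring
      _ ≤ ε ^ (n+2) * t ^ (n+2) := by gcongr
      _ = (ε * t) ^ (n+2) := by rw [mul_pow]
      _ ≤ _ := by gcongr
  have hC1 : C ≤ C / c' ^ A := by
    rw [le_div_iff₀ (by positivity)]
    have : c' ^ A ≤ 1 := pow_le_one₀ hc'.le hc1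
    nlinarith
  obtain ⟨zb, e, r, rs, ρ, hP, hI, v1, v2⟩ := HT (c' * ε ^ (n+2)) (by positivity)
    (mul_le_one₀ hc1 (by positivity) (pow_le_one₀ hε.le hε1)) E Es a b τ ha hb hτ hE hEs vE vEs vτ hm
  refine ⟨zb, e, r, rs, ρ, hP, ?_, ?_, ?_⟩
  · refine le_trans ?_ hI
    change _ * incT0 n E Es ≤ _
    rw [vτ, Real.rpow_natCast, ← ENNReal.ofReal_mul (by positivity)]
    apply ENNReal.ofReal_le_ofReal
    have : (C / c' ^ A)⁻¹ * ε ^ ((n+2) * A + 1) = C⁻¹ * (c' * ε ^ (n+2)) ^ A * ε := by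
      rw [mul_pow, ← pow_mul, pow_succ]; field_simp
    rw [this]
    have h0 : 0 ≤ C⁻¹ * (c' * ε ^ (n+2)) ^ A := by positivity
    have : C⁻¹ * (c' * ε ^ (n+2)) ^ A * ε ≤ C⁻¹ * (c' * ε ^ (n+2)) ^ A := mul_le_of_le_one_right h0 hε1
    gcongr
  · rw [vE, ← ENNReal.ofReal_mul (by positivity)]
    exact v1.trans (ENNReal.ofReal_le_ofReal (by gcongr))
  · rw [vEs, ← ENNReal.ofReal_mul (by positivity)]
    exact v2.trans (ENNReal.ofReal_le_ofReal (by gcongr))
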